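/- arXiv:1902.00368 — 2 statements merged into one kernel-verified Lean document; each statement's English description precedes it below -/
import Mathlib

section
/- Let b ∈ [0,1) and let (τ,c) ∈ 𝔇. Then the monotone traveling front of the neutral KPP-Fisher equation with speed c is unique up to translation: if φ and ψ are both monotone traveling fronts with the same speed c, then there exists h ∈ ℝ such that ψ(t) = φ(t + h) for all t ∈ ℝ. -/
open Filter

/-- Characteristic function χ₀(z) = z² − c·z + 1/(1 − b·e^{−z·c·τ}). -/
noncomputable def chi0 (b c τ z : ℝ) : ℝ :=
  z ^ 2 - c * z + 1 / (1 - b * Real.exp (-(z * c * τ)))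

/-- Characteristic function χ₁(z) = z² − c·z − e^{−z·c·τ}/(1 − b·e^{−z·c·τ}). -/
noncomputable def chi1 (b c τ z : ℝ) : ℝ :=
  z ^ 2 - c * z - Real.exp (-(z * c * τ)) / (1 - b * Real.exp (-(z * c * τ)))

/-- The domain 𝔇: χ₀ has a positive real zero and χ₁ has a negative real zero. -/
def inD (b τ c : ℝ) : Prop :=
  (∃ z > (0 : ℝ), chi0 b c τ z = 0) ∧ (∃ z < (0 : ℝ), chi1 b c τ z = 0)

/-- A monotone traveling front of the neutral KPP-Fisher equation with speed `c`. -/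
def IsMonotoneFront (b c τ : ℝ) (φ : ℝ → ℝ) : Prop :=
  Monotone φ ∧
  ContDiff ℝ 2 (fun t => φ t - b * φ (t - c * τ)) ∧
  (∀ t : ℝ,
    deriv (deriv (fun r => φ r - b * φ (r - c * τ))) t
      - c * deriv (fun r => φ r - b * φ (r - c * τ)) t
      + φ t * (1 - φ (t - c * τ)) = 0) ∧
  Tendsto φ atBot (nhds 0) ∧ Tendsto φ atTop (nhds 1)

theorem le_of_hasDerivAt_nonneg {f f' : ℝ → ℝ} {s t : ℝ} (hst : s ≤ t)
    (hf : ∀ r ∈ Set.Icc s t, HasDerivAt f (f' r) r) (hf' : ∀ r ∈ Set.Icc s t, 0 ≤ f' r) :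
    f s ≤ f t := by
  refine monotoneOn_of_deriv_nonneg (convex_Icc s t)
    (fun r hr => (hf r hr).continuousAt.continuousWithinAt)
    (fun r hr => (hf r (interior_subset hr)).differentiableAt.differentiableWithinAt)
    (fun r hr => ?_) (Set.left_mem_Icc.2 hst) (Set.right_mem_Icc.2 hst) hst
  rw [(hf r (interior_subset hr)).deriv]
  exact hf' r (interior_subset hr)

theorem ge_of_hasDerivAt_nonpos {f f' : ℝ → ℝ} {s t : ℝ} (hst : s ≤ t)
    (hf : ∀ r ∈ Set.Icc s t, HasDerivAt f (f' r) r) (hf' : ∀ r ∈ Set.Icc s t, f' r ≤ 0) :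
    f t ≤ f s := by
  have := le_of_hasDerivAt_nonneg hst (fun r hr => (hf r hr).neg)
    (fun r hr => neg_nonneg.2 (hf' r hr))
  simpa using this

theorem eq_of_hasDerivAt_zero {f : ℝ → ℝ} (hf : ∀ r, HasDerivAt f 0 r) (s t : ℝ) : f s = f t :=
  is_const_of_deriv_eq_zero (fun r => (hf r).differentiableAt) (fun r => (hf r).deriv) s t

theorem hasDerivAt_nonneg_of_left_max {f : ℝ → ℝ} {f' t : ℝ} (hf : HasDerivAt f f' t)
    (hmax : ∀ᶠ s in nhdsWithin t (Set.Iio t), f s ≤ f t) : 0 ≤ f' := by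
  have h := (hasDerivAt_iff_tendsto_slope_left_right.1 hf).1
  refine ge_of_tendsto h ?_
  filter_upwards [hmax, self_mem_nhdsWithin] with s hs hst
  rw [slope_def_field]
  exact div_nonneg_of_nonpos (by linarith) (by have : s < t := hst; linarith)

/-- Iterating the backward shift by `h` with factor `q` annihilates `G` in the limit. -/
def ShiftDecay (q h : ℝ) (G : ℝ → ℝ) : Prop :=
  ∀ t : ℝ, Tendsto (fun n : ℕ => q ^ n * G (t - n * h)) atTop (nhds 0)

namespace ShiftDecay

variable {q h : ℝ} {F G : ℝ → ℝ}

theorem add (hF : ShiftDecay q h F) (hG : ShiftDecay q h G) :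
    ShiftDecay q h (fun t => F t + G t) := fun t => by
  simpa [mul_add] using (hF t).add (hG t)

theorem const_mul (k : ℝ) (hF : ShiftDecay q h F) : ShiftDecay q h (fun t => k * F t) :=
  fun t => by
  have := (hF t).const_mul k
  rw [mul_zero] at this
  refine this.congr fun n => by ring

theorem sub (hF : ShiftDecay q h F) (hG : ShiftDecay q h G) :
    ShiftDecay q h (fun t => F t - G t) := fun t => by
  simpa [mul_sub] using (hF t).sub (hG t)

theorem shift (hF : ShiftDecay q h F) (k : ℝ) : ShiftDecay q h (fun t => F (t - k)) :=
  fun t => by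
  refine (hF (t - k)).congr fun n => ?_
  rw [sub_right_comm]

theorem const (hq0 : 0 ≤ q) (hq1 : q < 1) (k : ℝ) : ShiftDecay q h (fun _ => k) := fun t => by
  simpa using (tendsto_pow_atTop_nhds_zero_of_lt_one hq0 hq1).mul_const k

theorem of_bound {b lam C : ℝ} (hb0 : 0 ≤ b) (hb1 : b < 1) (hh : 0 < h)
    (hq : q = b * Real.exp (-(lam * h)))
    (hG : ∀ r ≤ 0, |G r| ≤ C * (1 + |r|) * Real.exp (-(lam * r))) : ShiftDecay q h G := by
  intro t
  have hC : 0 ≤ C := by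
    have := (abs_nonneg _).trans (hG 0 le_rfl)
    simpa using this
  have hlim : Tendsto (fun n : ℕ => C * Real.exp (-(lam * t)) * ((1 + |t|) * b ^ n
      + h * (n * b ^ n))) atTop (nhds 0) := by
    have h1 := (tendsto_pow_atTop_nhds_zero_of_lt_one hb0 hb1).const_mul (1 + |t|)
    have h2 := (tendsto_self_mul_const_pow_of_lt_one hb0 hb1).const_mul h
    simpa using (h1.add h2).const_mul (C * Real.exp (-(lam * t)))
  refine squeeze_zero_norm' ?_ hlim
  obtain ⟨N, hN⟩ := exists_nat_ge (t / h)
  filter_upwards [eventually_ge_atTop N] with n hn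
  have hn' : t / h ≤ n := hN.trans (by exact_mod_cast hn)
  have hle : t - n * h ≤ 0 := by
    rw [div_le_iff₀ hh] at hn'; linarith
  have hexp : Real.exp (-(lam * h)) ^ n * Real.exp (-(lam * (t - n * h)))
      = Real.exp (-(lam * t)) := by
    rw [← Real.exp_nat_mul, ← Real.exp_add]; congr 1; ring
  have habs : |t - n * h| ≤ |t| + n * h := by
    refine (abs_sub _ _).trans ?_
    rw [abs_of_nonneg (by positivity : (0:ℝ) ≤ n * h)]
  have hqn : |q ^ n| = b ^ n * Real.exp (-(lam * h)) ^ n := by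
    rw [hq, ← mul_pow, abs_of_nonneg (by positivity)]
  rw [Real.norm_eq_abs, abs_mul, hqn]
  calc b ^ n * Real.exp (-(lam * h)) ^ n * |G (t - n * h)|
      ≤ b ^ n * Real.exp (-(lam * h)) ^ n *
        (C * (1 + |t - n * h|) * Real.exp (-(lam * (t - n * h)))) := by
        gcongr; exact hG _ hle
    _ = b ^ n * C * (1 + |t - n * h|) * Real.exp (-(lam * t)) := by rw [← hexp]; ring
    _ ≤ b ^ n * C * (1 + (|t| + n * h)) * Real.exp (-(lam * t)) := by gcongr
    _ = _ := by ring

theorem le_div (hF : ShiftDecay q h F) (hq0 : 0 ≤ q) (hq1 : q < 1) (hh : 0 ≤ h) {s t : ℝ}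
    (hle : ∀ r ≤ t, F r ≤ q * F (r - h) + s) : F t ≤ s / (1 - q) := by
  have hn : ∀ n : ℕ, F t ≤ q ^ n * F (t - n * h) + s / (1 - q) * (1 - q ^ n) := by
    intro n
    induction n with
    | zero => simp
    | succ n ih =>
      have h1 := hle (t - n * h) (by have : 0 ≤ n * h := by positivity
                                     linarith)
      have h2 := mul_le_mul_of_nonneg_left h1 (pow_nonneg hq0 n)
      have e1 : t - n * h - h = t - (n + 1 : ℕ) * h := by push_cast; ring
      rw [e1] at h2
      refine ih.trans ?_
      have h3 : s / (1 - q) * (1 - q) = s := div_mul_cancel₀ _ (by linarith)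
      have : s / (1 - q) * (1 - q ^ (n + 1)) = s / (1 - q) * (1 - q ^ n)
          + q ^ n * (s / (1 - q) * (1 - q)) := by ring
      rw [this, h3, pow_succ]
      nlinarith
  have hlim : Tendsto (fun n : ℕ => q ^ n * F (t - n * h) + s / (1 - q) * (1 - q ^ n)) atTop
      (nhds (s / (1 - q))) := by
    have := (hF t).add (((tendsto_pow_atTop_nhds_zero_of_lt_one hq0 hq1).const_sub 1).const_mul
      (s / (1 - q)))
    simpa using this
  exact ge_of_tendsto' hlim hn

end ShiftDecay

/-- `∫₀ˢ e^{-δ r} dr`. -/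
noncomputable def expInt (δ s : ℝ) : ℝ := ∫ r in (0 : ℝ)..s, Real.exp (-(δ * r))

/-- The second iterated primitive of `e^{-δ r}`. -/
noncomputable def expIntTwo (δ s : ℝ) : ℝ := ∫ r in (0 : ℝ)..s, expInt δ r

theorem hasDerivAt_expInt (δ s : ℝ) : HasDerivAt (expInt δ) (Real.exp (-(δ * s))) s :=
  (Continuous.integral_hasStrictDerivAt (by fun_prop) 0 s).hasDerivAt

theorem hasDerivAt_expIntTwo (δ s : ℝ) : HasDerivAt (expIntTwo δ) (expInt δ s) s :=
  (Continuous.integral_hasStrictDerivAt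
    (continuous_iff_continuousAt.2 fun r => (hasDerivAt_expInt δ r).continuousAt) 0 s).hasDerivAt

@[simp] theorem expInt_zero (δ : ℝ) : expInt δ 0 = 0 := by simp [expInt]

@[simp] theorem expIntTwo_zero (δ : ℝ) : expIntTwo δ 0 = 0 := by simp [expIntTwo]

theorem expInt_zero_left (s : ℝ) : expInt 0 s = s := by simp [expInt]

theorem mul_expInt (δ s : ℝ) : δ * expInt δ s = 1 - Real.exp (-(δ * s)) := by
  have h : ∀ r, HasDerivAt (fun r => δ * expInt δ r + Real.exp (-(δ * r))) 0 r := fun r => by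
    have h1 := ((hasDerivAt_expInt δ r).const_mul δ).add
      (((hasDerivAt_id r).const_mul δ).neg.exp)
    exact h1.congr_deriv (by simp; ring)
  have := eq_of_hasDerivAt_zero h s 0
  simp at this
  linarith

theorem mul_expIntTwo (δ s : ℝ) : δ * expIntTwo δ s = s - expInt δ s := by
  have h : ∀ r, HasDerivAt (fun r => δ * expIntTwo δ r - (r - expInt δ r)) 0 r := fun r => by
    have h1 := ((hasDerivAt_expIntTwo δ r).const_mul δ).sub
      ((hasDerivAt_id r).sub (hasDerivAt_expInt δ r))
    exact h1.congr_deriv (by rw [mul_expInt]; ring)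
  have := eq_of_hasDerivAt_zero h s 0
  simp at this
  linarith

theorem expInt_nonneg (δ : ℝ) {s : ℝ} (hs : 0 ≤ s) : 0 ≤ expInt δ s := by
  have := le_of_hasDerivAt_nonneg hs (fun r _ => hasDerivAt_expInt δ r)
    (fun r _ => (Real.exp_pos _).le)
  simpa using this

theorem expInt_le {δ s : ℝ} (hδ : 0 ≤ δ) (hs : 0 ≤ s) : expInt δ s ≤ s := by
  have := le_of_hasDerivAt_nonneg hs (f := fun r => r - expInt δ r)
    (fun r _ => (hasDerivAt_id r).sub (hasDerivAt_expInt δ r))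
    (fun r hr => by
      have : Real.exp (-(δ * r)) ≤ 1 :=
        Real.exp_le_one_iff.2 (by have := mul_nonneg hδ hr.1; linarith)
      linarith)
  simpa using this

theorem expIntTwo_nonneg (δ : ℝ) {s : ℝ} (hs : 0 ≤ s) : 0 ≤ expIntTwo δ s := by
  have := le_of_hasDerivAt_nonneg hs (fun r _ => hasDerivAt_expIntTwo δ r)
    (fun r hr => expInt_nonneg δ hr.1)
  simpa using this

theorem expIntTwo_le (δ : ℝ) {s : ℝ} (hs : 0 ≤ s) : expIntTwo δ s ≤ s * expInt δ s := by
  have := le_of_hasDerivAt_nonneg hs (f := fun r => r * expInt δ r - expIntTwo δ r)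
    (fun r _ => ((hasDerivAt_id r).mul (hasDerivAt_expInt δ r)).sub (hasDerivAt_expIntTwo δ r))
    (fun r hr => by
      have := mul_nonneg hr.1 (Real.exp_pos (-(δ * r))).le
      simp only [id]; linarith)
  simpa using this

/-- A pair `lam ≤ lam + δ` of zeros of `χ₀` (counted with multiplicity), together with the
derived quantities entering the weighted system. -/
structure IsSpectralPair (b c h lam δ D q e₁ e₂ : ℝ) : Prop where
  b_nonneg : 0 ≤ b
  b_lt_one : b < 1
  h_pos : 0 < h
  lam_pos : 0 < lam
  δ_nonneg : 0 ≤ δ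
  q_def : q = b * Real.exp (-(lam * h))
  e₁_mul : e₁ * (1 - q) = 1
  e₂_mul : e₂ * (1 - q * Real.exp (-(δ * h))) = 1
  root : lam * (c - lam) = e₁
  D_def : D = 2 * lam + δ - c
  D_eq : D = q * e₁ * e₂ * expInt δ h

namespace IsSpectralPair

variable {b c h lam δ D q e₁ e₂ : ℝ}

theorem q_nonneg (S : IsSpectralPair b c h lam δ D q e₁ e₂) : 0 ≤ q := by
  rw [S.q_def]; exact mul_nonneg S.b_nonneg (Real.exp_pos _).le

theorem q_lt_one (S : IsSpectralPair b c h lam δ D q e₁ e₂) : q < 1 := by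
  have h1 : Real.exp (-(lam * h)) ≤ 1 :=
    Real.exp_le_one_iff.2 (by have := mul_pos S.lam_pos S.h_pos; linarith)
  rw [S.q_def]
  have := mul_le_mul_of_nonneg_left h1 S.b_nonneg
  linarith [S.b_lt_one]

theorem exp_le_one (S : IsSpectralPair b c h lam δ D q e₁ e₂) : Real.exp (-(δ * h)) ≤ 1 :=
  Real.exp_le_one_iff.2 (by have := mul_nonneg S.δ_nonneg S.h_pos.le; linarith)

theorem q_mul_exp_le (S : IsSpectralPair b c h lam δ D q e₁ e₂) : q * Real.exp (-(δ * h)) ≤ q :=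
  mul_le_of_le_one_right S.q_nonneg S.exp_le_one

theorem e₁_pos (S : IsSpectralPair b c h lam δ D q e₁ e₂) : 0 < e₁ := by
  have := S.e₁_mul
  have h2 := S.q_lt_one
  by_contra hcon
  nlinarith

theorem e₂_pos (S : IsSpectralPair b c h lam δ D q e₁ e₂) : 0 < e₂ := by
  have := S.e₂_mul
  have h2 := S.q_lt_one
  have h3 := S.q_mul_exp_le
  by_contra hcon
  nlinarith

theorem D_nonneg (S : IsSpectralPair b c h lam δ D q e₁ e₂) : 0 ≤ D := by
  rw [S.D_eq]
  have := S.q_nonneg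
  have := S.e₁_pos
  have := S.e₂_pos
  have := expInt_nonneg δ S.h_pos.le
  positivity

theorem e₁_sub (S : IsSpectralPair b c h lam δ D q e₁ e₂) : e₁ - D * δ = e₂ := by
  rw [S.D_eq]
  have h1 := mul_expInt δ h
  have h2 : q * e₁ * e₂ * expInt δ h * δ = q * e₁ * e₂ * (1 - Real.exp (-(δ * h))) := by
    rw [← h1]; ring
  rw [h2]
  linear_combination (-e₁) * S.e₂_mul + e₂ * S.e₁_mul

theorem lam_mul_mu (S : IsSpectralPair b c h lam δ D q e₁ e₂) : lam * (lam + δ) = e₁ + lam * D := by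
  rw [S.D_def, ← S.root]; ring

end IsSpectralPair

/-- The norm bound for the feedback operator in the weighted system. -/
noncomputable def feedback (h δ q e₁ e₂ : ℝ) : ℝ :=
  q * e₁ ^ 2 * (expIntTwo δ h + q * e₂ * expInt δ h ^ 2)

theorem mul_sq_le_one_sub_sq {q x : ℝ} (hx : 0 < x) (hq0 : 0 ≤ q)
    (hq : q ≤ Real.exp (-x)) : q * x ^ 2 ≤ (1 - q) ^ 2 := by
  set r := Real.exp (-(x / 2)) with hr
  have hr0 : 0 < r := Real.exp_pos _
  have hp : Real.exp (-x) = r ^ 2 := by rw [hr, ← Real.exp_nat_mul]; congr 1; push_cast; ring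
  have hr1 : r < 1 := Real.exp_lt_one_iff.2 (by linarith)
  have h1 : x / 2 ≤ Real.sinh (x / 2) := Real.self_le_sinh_iff.2 (by linarith)
  rw [Real.sinh_eq] at h1
  have h2 : r * Real.exp (x / 2) = 1 := by rw [hr, ← Real.exp_add]; simp
  have h3 : r * x ≤ 1 - r ^ 2 := by nlinarith
  have h4 : (r * x) ^ 2 ≤ (1 - r ^ 2) ^ 2 := by
    have : 0 ≤ r * x := by positivity
    gcongr
  rw [hp] at hq
  have h5 : 0 ≤ (r ^ 2 - q) * (1 - r ^ 2 * q) := by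
    apply mul_nonneg (by linarith)
    have : r ^ 2 * q ≤ 1 := by
      have : r ^ 2 ≤ 1 := by nlinarith
      nlinarith
    linarith
  have h6 : r ^ 2 * (q * x ^ 2) ≤ r ^ 2 * (1 - q) ^ 2 := by nlinarith
  exact le_of_mul_le_mul_left h6 (by positivity)

namespace IsSpectralPair

variable {b c h lam δ D q e₁ e₂ : ℝ}

theorem feedback_nonneg (S : IsSpectralPair b c h lam δ D q e₁ e₂) : 0 ≤ feedback h δ q e₁ e₂ := by
  have h1 := S.q_nonneg
  have h2 := S.e₂_pos
  have h3 := expIntTwo_nonneg δ S.h_pos.le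
  unfold feedback
  positivity

theorem feedback_lt_one (S : IsSpectralPair b c h lam δ D q e₁ e₂) : feedback h δ q e₁ e₂ < 1 := by
  have hq0 := S.q_nonneg
  have hq1 := S.q_lt_one
  have he1 := S.e₁_pos
  have he2 := S.e₂_pos
  have hl := S.lam_pos
  have hh := S.h_pos
  have hδ := S.δ_nonneg
  have hD := S.D_nonneg
  unfold feedback
  set E := expInt δ h
  set F := expIntTwo δ h
  have hE0 : 0 ≤ E := expInt_nonneg δ hh.le
  have hEh : E ≤ h := expInt_le hδ hh.le
  have hFE : F ≤ h * E := expIntTwo_le δ hh.le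
  have hδF : δ * F = h - E := mul_expIntTwo δ h
  have hDE : D = q * e₁ * e₂ * E := S.D_eq
  have he : e₁ - D * δ = e₂ := S.e₁_sub
  have he12 : e₂ ≤ e₁ := by have := mul_nonneg hD hδ; linarith
  set x := lam * h with hx
  have hx0 : 0 < x := mul_pos hl hh
  set θ := q * e₁ * x with hθ
  have hθ0 : 0 ≤ θ := by positivity
  have hqx : q ≤ Real.exp (-x) := by
    rw [S.q_def]
    exact mul_le_of_le_one_left (Real.exp_pos _).le S.b_lt_one.le
  have hqx1 : q * (1 + x) < 1 := by
    have h1 : 1 + x ≤ Real.exp x := by have := Real.add_one_le_exp x; linarith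
    have h2 : q * Real.exp x = b := by
      rw [S.q_def, mul_assoc, ← Real.exp_add]; simp [hx]
    have := mul_le_mul_of_nonneg_left h1 hq0
    linarith [S.b_lt_one]
  have hθ1 : θ < 1 := by
    have h1 : e₁ * (q * (1 + x)) < e₁ * 1 := mul_lt_mul_of_pos_left hqx1 he1
    have := S.e₁_mul
    rw [hθ]; nlinarith
  have hθx : θ * x ≤ 1 - q := by
    have h1 := mul_sq_le_one_sub_sq hx0 hq0 hqx
    have h2 : e₁ * (q * x ^ 2) ≤ e₁ * (1 - q) ^ 2 := mul_le_mul_of_nonneg_left h1 he1.le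
    have h3 : e₁ * (1 - q) ^ 2 = 1 - q := by
      have : e₁ * (1 - q) ^ 2 = e₁ * (1 - q) * (1 - q) := by ring
      rw [this, S.e₁_mul, one_mul]
    have h4 : θ * x = e₁ * (q * x ^ 2) := by rw [hθ]; ring
    linarith
  have key : q * lam * e₂ * (lam * F + θ * E - 2 * E) < 1 - θ := by
    by_cases hs : x + θ - 2 ≤ 0
    · have h1 : lam * F + θ * E - 2 * E ≤ 0 := by
        have : lam * F ≤ x * E := by
          have := mul_le_mul_of_nonneg_left hFE hl.le
          rw [hx]; linarith
        nlinarith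
      have h2 : q * lam * e₂ * (lam * F + θ * E - 2 * E) ≤ 0 :=
        mul_nonpos_of_nonneg_of_nonpos (by positivity) h1
      linarith
    · push Not at hs
      have h1 : lam * F + θ * E - 2 * E ≤ (x + θ - 2) * h := by
        have : lam * F ≤ x * E := by
          have := mul_le_mul_of_nonneg_left hFE hl.le
          rw [hx]; linarith
        nlinarith
      have h2 : q * lam * e₂ * (lam * F + θ * E - 2 * E) ≤ q * lam * e₂ * ((x + θ - 2) * h) :=
        mul_le_mul_of_nonneg_left h1 (by positivity)
      have h3 : q * lam * e₂ * ((x + θ - 2) * h) ≤ q * lam * e₁ * ((x + θ - 2) * h) := by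
        have : 0 ≤ (x + θ - 2) * h := by positivity
        gcongr
      have h4 : q * lam * e₁ * ((x + θ - 2) * h) = θ * (x + θ - 2) := by rw [hθ, hx]; ring
      have h5 : θ * x + θ ^ 2 - θ < 1 := by
        rcases hq0.eq_or_lt with h0 | h0
        · have : θ = 0 := by rw [hθ, ← h0]; ring
          rw [this]; norm_num
        · nlinarith
      nlinarith
  have hdE : q * e₁ * e₂ * E * δ = e₁ - e₂ := by rw [← hDE]; linarith
  have hmul : lam * (lam + δ) * (q * e₁ ^ 2 * (F + q * e₂ * E ^ 2))
      = e₁ * (q * lam * e₂ * (lam * F + θ * E - 2 * E) + θ + q * lam * e₂ * E) := by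
    rw [hθ, hx]
    linear_combination (q * e₁ ^ 2 * lam + q ^ 2 * e₁ ^ 2 * e₂ * lam ^ 2 * E) * hδF
      + (q * e₁ * lam * E - lam ^ 2 * q * e₁ * F) * hdE
  have hlm : lam * (lam + δ) = e₁ * (1 + q * lam * e₂ * E) := by
    rw [S.lam_mul_mu, hDE]; ring
  have hpos : 0 < lam * (lam + δ) := by positivity
  have : lam * (lam + δ) * (q * e₁ ^ 2 * (F + q * e₂ * E ^ 2)) < lam * (lam + δ) * 1 := by
    rw [hmul, hlm, mul_one]
    exact mul_lt_mul_of_pos_left (by linarith) he1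
  exact lt_of_mul_lt_mul_left this hpos.le

end IsSpectralPair

/-- The value `1 / (1 - b e^{-κ h})` at which the neutral operator acts on `e^{κ t}`. -/
noncomputable def neutralGain (b h κ : ℝ) : ℝ := 1 / (1 - b * Real.exp (-(κ * h)))

theorem chi0_eq (b c τ z : ℝ) : chi0 b c τ z = z ^ 2 - c * z + neutralGain b (c * τ) z := by
  rw [chi0, neutralGain, mul_assoc z c τ]

theorem one_sub_mul_exp_pos {b h κ : ℝ} (hb0 : 0 ≤ b) (hb1 : b < 1) (hh : 0 ≤ h) (hκ : 0 ≤ κ) :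
    0 < 1 - b * Real.exp (-(κ * h)) := by
  have h1 : Real.exp (-(κ * h)) ≤ 1 :=
    Real.exp_le_one_iff.2 (by have := mul_nonneg hκ hh; linarith)
  have := mul_le_mul_of_nonneg_left h1 hb0
  linarith

theorem neutralGain_pos {b h κ : ℝ} (hb0 : 0 ≤ b) (hb1 : b < 1) (hh : 0 ≤ h) (hκ : 0 ≤ κ) :
    0 < neutralGain b h κ :=
  one_div_pos.2 (one_sub_mul_exp_pos hb0 hb1 hh hκ)

theorem hasDerivAt_char {b c h κ : ℝ} (hb0 : 0 ≤ b) (hb1 : b < 1) (hh : 0 ≤ h) (hκ : 0 ≤ κ) :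
    HasDerivAt (fun z => z ^ 2 - c * z + neutralGain b h z)
      (2 * κ - c - b * Real.exp (-(κ * h)) * h * neutralGain b h κ ^ 2) κ := by
  have hne := (one_sub_mul_exp_pos hb0 hb1 hh hκ).ne'
  have h1 := ((((hasDerivAt_id κ).mul_const h).neg.exp.const_mul b).const_sub 1).inv hne
  have h2 := (((hasDerivAt_id κ).pow 2).sub ((hasDerivAt_id κ).const_mul c)).add h1
  have h3 : (fun z => z ^ 2 - c * z + neutralGain b h z) =
      fun z => z ^ 2 - c * z + (1 - b * Real.exp (-(z * h)))⁻¹ := by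
    funext z; rw [neutralGain, one_div]
  rw [h3]
  refine h2.congr_deriv ?_
  simp only [neutralGain, id]
  simp
  field_simp
  ring

theorem exists_isSpectralPair {b c h z : ℝ} (hb0 : 0 ≤ b) (hb1 : b < 1) (hh : 0 < h)
    (hc : 0 < c) (hz : 0 < z) (hz0 : z ^ 2 - c * z + neutralGain b h z = 0) :
    ∃ lam δ D q e₁ e₂, IsSpectralPair b c h lam δ D q e₁ e₂ ∧
      ∀ κ > lam + δ, 0 < κ ^ 2 - c * κ + neutralGain b h κ := by
  set χ : ℝ → ℝ := fun z => z ^ 2 - c * z + neutralGain b h z with hχ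
  have hcont : ContinuousOn χ (Set.Ici 0) := fun κ hκ =>
    (hasDerivAt_char hb0 hb1 hh.le hκ).continuousAt.continuousWithinAt
  have hbig : ∀ κ, c ≤ κ → 0 < χ κ := fun κ hκ => by
    have := neutralGain_pos hb0 hb1 hh.le (hc.le.trans hκ)
    simp only [hχ]; nlinarith
  have h0 : 0 < χ 0 := by
    have := neutralGain_pos hb0 hb1 hh.le (le_refl (0:ℝ))
    simpa [hχ] using this
  set Z := Set.Icc 0 c ∩ χ ⁻¹' {0} with hZ
  have hZc : IsCompact Z := by
    refine isCompact_Icc.of_isClosed_subset ?_ Set.inter_subset_left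
    exact (hcont.mono Set.Icc_subset_Ici_self).preimage_isClosed_of_isClosed isClosed_Icc
      isClosed_singleton
  have hmem : ∀ κ, 0 ≤ κ → χ κ = 0 → κ ∈ Z := fun κ h1 h2 => by
    refine ⟨⟨h1, ?_⟩, h2⟩
    by_contra hcon
    exact (hbig κ (not_le.1 hcon).le).ne' h2
  obtain ⟨m, hmZ, hmax⟩ := hZc.exists_isGreatest ⟨z, hmem z hz.le hz0⟩
  have hpos : ∀ κ ∈ Z, 0 < κ := fun κ hκ => by
    rcases hκ.1.1.eq_or_lt with h | h
    · exfalso; rw [← h] at hκ; exact h0.ne' hκ.2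
    · exact h
  have hm0 : 0 < m := hpos m hmZ
  have hχm : χ m = 0 := hmZ.2
  have habove : ∀ κ > m, 0 < χ κ := fun κ hκ => by
    by_contra hcon
    have hle : κ ≤ c + κ := by linarith
    have hsub : Set.Icc κ (c + κ) ⊆ Set.Ici 0 := fun y hy => by
      have := hy.1; exact (hm0.trans hκ).le.trans this
    obtain ⟨y, hy, hy0⟩ := intermediate_value_Icc hle (hcont.mono hsub)
      ⟨not_lt.1 hcon, (hbig (c + κ) (by linarith)).le⟩
    have := hmax (hmem y (hsub hy) hy0)
    linarith [hy.1]
  have hmgain : m * (c - m) = neutralGain b h m := by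
    have : m ^ 2 - c * m + neutralGain b h m = 0 := hχm
    linarith
  by_cases hex : ∃ l ∈ Z, l ≠ m
  · obtain ⟨l, hlZ, hne⟩ := hex
    have hl0 := hpos l hlZ
    have hlm : l < m := lt_of_le_of_ne (hmax hlZ) hne
    have hlgain : l * (c - l) = neutralGain b h l := by
      have : l ^ 2 - c * l + neutralGain b h l = 0 := hlZ.2
      linarith
    have hp1 := one_sub_mul_exp_pos hb0 hb1 hh.le hl0.le
    have hp2 := one_sub_mul_exp_pos hb0 hb1 hh.le hm0.le
    have hsplit :
        b * Real.exp (-(l * h)) * Real.exp (-((m - l) * h)) = b * Real.exp (-(m * h)) := by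
      rw [mul_assoc, ← Real.exp_add]; congr 2; ring
    have hg1 : neutralGain b h l * (1 - b * Real.exp (-(l * h))) = 1 := by
      rw [neutralGain]; field_simp
    have hg2 : neutralGain b h m * (1 - b * Real.exp (-(m * h))) = 1 := by
      rw [neutralGain]; field_simp
    refine ⟨l, m - l, 2 * l + (m - l) - c, b * Real.exp (-(l * h)), neutralGain b h l,
      neutralGain b h m, ⟨hb0, hb1, hh, hl0, by linarith, rfl, hg1, ?_, hlgain, rfl, ?_⟩, ?_⟩
    · rw [hsplit]; exact hg2
    · have h1 := mul_expInt (m - l) h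
      have hml : m - l ≠ 0 := by linarith
      apply mul_left_cancel₀ hml
      have h2 : (m - l) * (2 * l + (m - l) - c) = neutralGain b h l - neutralGain b h m := by
        rw [← hlgain, ← hmgain]; ring
      rw [h2]
      have h3 : (m - l) * (b * Real.exp (-(l * h)) * neutralGain b h l * neutralGain b h m
          * expInt (m - l) h) = neutralGain b h l * neutralGain b h m *
          (b * Real.exp (-(l * h)) - b * Real.exp (-(l * h)) * Real.exp (-((m - l) * h))) := by
        linear_combination (b * Real.exp (-(l * h)) * neutralGain b h l * neutralGain b h m) * h1
      rw [h3, hsplit]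
      linear_combination neutralGain b h m * hg1 - neutralGain b h l * hg2
    · intro κ hκ
      exact habove κ (by linarith)
  · push Not at hex
    have hpos' : ∀ κ, 0 ≤ κ → 0 ≤ χ κ := fun κ hκ => by
      by_contra hcon
      push Not at hcon
      have hsub : Set.Icc 0 κ ⊆ Set.Ici 0 := fun y hy => hy.1
      obtain ⟨y, hy, hy0⟩ := intermediate_value_Icc' hκ (hcont.mono hsub) ⟨hcon.le, h0.le⟩
      have hym := hex y (hmem y hy.1 hy0)
      have : κ ≠ m := fun h => by rw [h, hχm] at hcon; exact lt_irrefl _ hcon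
      have : m < κ := lt_of_le_of_ne (hym ▸ hy.2) this.symm
      linarith [habove κ this]
    have hmin : IsLocalMin χ m := by
      filter_upwards [lt_mem_nhds hm0] with κ hκ
      rw [hχm]; exact hpos' κ hκ.le
    have hder := hmin.hasDerivAt_eq_zero (hasDerivAt_char hb0 hb1 hh.le hm0.le)
    have hp2 := one_sub_mul_exp_pos hb0 hb1 hh.le hm0.le
    have hg2 : neutralGain b h m * (1 - b * Real.exp (-(m * h))) = 1 := by
      rw [neutralGain]; field_simp
    refine ⟨m, 0, 2 * m + 0 - c, b * Real.exp (-(m * h)), neutralGain b h m,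
      neutralGain b h m, ⟨hb0, hb1, hh, hm0, le_rfl, rfl, hg2, by simpa using hg2, hmgain, rfl, ?_⟩,
      fun κ hκ => habove κ (by linarith)⟩
    rw [expInt_zero_left]
    linear_combination hder

/-- The front equation in exponentially weighted form: `V` is the weighted neutral part,
`Y` the weighted profile, `a = δ V - V'`, and `M` the weighted nonlinearity. -/
structure IsWeightedSystem (h lam δ D q e₂ : ℝ) (V a Y M : ℝ → ℝ) : Prop where
  hasDerivAt_V : ∀ t, HasDerivAt V (δ * V t - a t) t
  hasDerivAt_a : ∀ t, HasDerivAt a (-D * a t + (Y t - e₂ * V t) - M t) t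
  neutral : ∀ t, Y t = V t + q * Y (t - h)
  continuous_Y : Continuous Y
  bound : ∃ C, ∀ t, |V t| ≤ C * Real.exp (-(lam * t)) ∧ |Y t| ≤ C * Real.exp (-(lam * t))

/-- A primitive of `D a - (Y - e₂ V)` that is controlled by the past of `a`. -/
noncomputable def memoryTerm (h D q e₁ : ℝ) (V Y : ℝ → ℝ) (t : ℝ) : ℝ :=
  e₁ * (∫ r in (0 : ℝ)..t, V r) - (∫ r in (0 : ℝ)..t, Y r)
    - q * e₁ * (∫ r in (0 : ℝ)..(-h), Y r) - D * V t

theorem memoryTerm_neg (h D q e₁ : ℝ) (V Y : ℝ → ℝ) (t : ℝ) :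
    memoryTerm h D q e₁ (fun r => -V r) (fun r => -Y r) t = -memoryTerm h D q e₁ V Y t := by
  simp only [memoryTerm, intervalIntegral.integral_neg]; ring

theorem abs_integral_le_of_exp_bound {lam C : ℝ} (hl : 0 ≤ lam) {F : ℝ → ℝ}
    (hF : ∀ t, |F t| ≤ C * Real.exp (-(lam * t))) {r : ℝ} (hr : r ≤ 0) :
    |∫ s in (0 : ℝ)..r, F s| ≤ C * (1 + |r|) * Real.exp (-(lam * r)) := by
  have hC : 0 ≤ C := by simpa using (abs_nonneg _).trans (hF 0)
  have h1 : ‖∫ s in (0 : ℝ)..r, F s‖ ≤ C * Real.exp (-(lam * r)) * |r - 0| := by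
    refine intervalIntegral.norm_integral_le_of_norm_le_const fun s hs => ?_
    rw [Set.uIoc_of_ge hr] at hs
    refine (hF s).trans ?_
    have : lam * r ≤ lam * s := mul_le_mul_of_nonneg_left hs.1.le hl
    gcongr
  rw [Real.norm_eq_abs, sub_zero] at h1
  have := mul_nonneg hC (Real.exp_pos (-(lam * r))).le
  nlinarith

namespace IsWeightedSystem

section Algebra

variable {h lam δ D q e₂ : ℝ} {V a Y M V' a' Y' M' : ℝ → ℝ}

theorem neg (W : IsWeightedSystem h lam δ D q e₂ V a Y M) :
    IsWeightedSystem h lam δ D q e₂ (fun t => -V t) (fun t => -a t) (fun t => -Y t)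
      (fun t => -M t) where
  hasDerivAt_V t := (W.hasDerivAt_V t).neg.congr_deriv (by ring)
  hasDerivAt_a t := (W.hasDerivAt_a t).neg.congr_deriv (by ring)
  neutral t := by rw [W.neutral t]; ring
  continuous_Y := W.continuous_Y.neg
  bound := by simpa using W.bound

theorem sub (W : IsWeightedSystem h lam δ D q e₂ V a Y M)
    (W' : IsWeightedSystem h lam δ D q e₂ V' a' Y' M') :
    IsWeightedSystem h lam δ D q e₂ (fun t => V t - V' t) (fun t => a t - a' t)
      (fun t => Y t - Y' t) (fun t => M t - M' t) where
  hasDerivAt_V t := ((W.hasDerivAt_V t).sub (W'.hasDerivAt_V t)).congr_deriv (by ring)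
  hasDerivAt_a t := ((W.hasDerivAt_a t).sub (W'.hasDerivAt_a t)).congr_deriv (by ring)
  neutral t := by rw [W.neutral t, W'.neutral t]; ring
  continuous_Y := W.continuous_Y.sub W'.continuous_Y
  bound := by
    obtain ⟨C, hC⟩ := W.bound
    obtain ⟨C', hC'⟩ := W'.bound
    refine ⟨C + C', fun t => ⟨(abs_sub _ _).trans ?_, (abs_sub _ _).trans ?_⟩⟩
    · linarith [(hC t).1, (hC' t).1]
    · linarith [(hC t).2, (hC' t).2]

theorem continuous_V (W : IsWeightedSystem h lam δ D q e₂ V a Y M) : Continuous V :=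
  continuous_iff_continuousAt.2 fun t => (W.hasDerivAt_V t).continuousAt

theorem continuous_a (W : IsWeightedSystem h lam δ D q e₂ V a Y M) : Continuous a :=
  continuous_iff_continuousAt.2 fun t => (W.hasDerivAt_a t).continuousAt

end Algebra

variable {b c h lam δ D q e₁ e₂ : ℝ} {V a Y M : ℝ → ℝ}

theorem decay_V (W : IsWeightedSystem h lam δ D q e₂ V a Y M)
    (S : IsSpectralPair b c h lam δ D q e₁ e₂) : ShiftDecay q h V := by
  obtain ⟨C, hC⟩ := W.bound
  refine ShiftDecay.of_bound S.b_nonneg S.b_lt_one S.h_pos S.q_def (C := C) fun r _ => ?_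
  have h0 : 0 ≤ C := by simpa using (abs_nonneg _).trans (hC 0).1
  refine (hC r).1.trans ?_
  have := mul_nonneg (mul_nonneg h0 (abs_nonneg r)) (Real.exp_pos (-(lam * r))).le
  linarith

theorem decay_Y (W : IsWeightedSystem h lam δ D q e₂ V a Y M)
    (S : IsSpectralPair b c h lam δ D q e₁ e₂) : ShiftDecay q h Y := by
  obtain ⟨C, hC⟩ := W.bound
  refine ShiftDecay.of_bound S.b_nonneg S.b_lt_one S.h_pos S.q_def (C := C) fun r _ => ?_
  have h0 : 0 ≤ C := by simpa using (abs_nonneg _).trans (hC 0).1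
  refine (hC r).2.trans ?_
  have := mul_nonneg (mul_nonneg h0 (abs_nonneg r)) (Real.exp_pos (-(lam * r))).le
  linarith

theorem decay_memoryTerm (W : IsWeightedSystem h lam δ D q e₂ V a Y M)
    (S : IsSpectralPair b c h lam δ D q e₁ e₂) : ShiftDecay q h (memoryTerm h D q e₁ V Y) := by
  obtain ⟨C, hC⟩ := W.bound
  have h1 : ShiftDecay q h (fun t => ∫ r in (0 : ℝ)..t, V r) :=
    ShiftDecay.of_bound S.b_nonneg S.b_lt_one S.h_pos S.q_def fun r hr =>
      abs_integral_le_of_exp_bound S.lam_pos.le (fun t => (hC t).1) hr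
  have h2 : ShiftDecay q h (fun t => ∫ r in (0 : ℝ)..t, Y r) :=
    ShiftDecay.of_bound S.b_nonneg S.b_lt_one S.h_pos S.q_def fun r hr =>
      abs_integral_le_of_exp_bound S.lam_pos.le (fun t => (hC t).2) hr
  exact (((h1.const_mul e₁).sub h2).sub
    (ShiftDecay.const S.q_nonneg S.q_lt_one _)).sub ((W.decay_V S).const_mul D)

theorem V_sub_le (W : IsWeightedSystem h lam δ D q e₂ V a Y M) {t β : ℝ}
    (hβ : ∀ r ≤ t, a r ≤ β) {s : ℝ} (hs : 0 ≤ s) :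
    V (t - s) ≤ Real.exp (-(δ * s)) * V t + β * expInt δ s := by
  have hd : ∀ r ∈ Set.Icc 0 s, HasDerivAt
      (fun r => Real.exp (δ * r) * (β * expInt δ r - V (t - r)))
      (Real.exp (δ * r) * (β - a (t - r))) r := fun r _ => by
    have h1 : HasDerivAt (fun r => V (t - r)) (-(δ * V (t - r) - a (t - r))) r := by
      have := (W.hasDerivAt_V (t - r)).comp r ((hasDerivAt_id r).const_sub t)
      exact this.congr_deriv (by simp)
    have h2 := (((hasDerivAt_id r).const_mul δ).exp).mul
      (((hasDerivAt_expInt δ r).const_mul β).sub h1)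
    refine h2.congr_deriv ?_
    have := mul_expInt δ r
    simp only [id, mul_one, Pi.sub_apply]
    linear_combination (Real.exp (δ * r) * β) * this
  have h := le_of_hasDerivAt_nonneg hs hd fun r hr =>
    mul_nonneg (Real.exp_pos _).le (sub_nonneg.2 (hβ _ (by linarith [hr.1])))
  simp at h
  have h3 := mul_le_mul_of_nonneg_left h (Real.exp_pos (-(δ * s))).le
  rw [← mul_assoc, ← Real.exp_add] at h3
  simp at h3
  linarith

theorem integral_V_sub_le (W : IsWeightedSystem h lam δ D q e₂ V a Y M) {t β : ℝ}
    (hβ : ∀ r ≤ t, a r ≤ β) {s : ℝ} (hs : 0 ≤ s) :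
    (∫ r in (0 : ℝ)..t, V r) - (∫ r in (0 : ℝ)..(t - s), V r)
      ≤ expInt δ s * V t + β * expIntTwo δ s := by
  have hd : ∀ r ∈ Set.Icc 0 s, HasDerivAt
      (fun r => expInt δ r * V t + β * expIntTwo δ r + ∫ x in (0 : ℝ)..(t - r), V x)
      (Real.exp (-(δ * r)) * V t + β * expInt δ r - V (t - r)) r := fun r _ => by
    have h1 : HasDerivAt (fun r => ∫ x in (0 : ℝ)..(t - r), V x) (-V (t - r)) r := by
      have := ((W.continuous_V.integral_hasStrictDerivAt 0 (t - r)).hasDerivAt).comp r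
        ((hasDerivAt_id r).const_sub t)
      exact this.congr_deriv (by simp)
    exact (((hasDerivAt_expInt δ r).mul_const (V t)).add
      ((hasDerivAt_expIntTwo δ r).const_mul β)).add h1
  have h := le_of_hasDerivAt_nonneg hs hd fun r hr =>
    sub_nonneg.2 (W.V_sub_le hβ hr.1)
  simp at h
  linarith

theorem gap_le (W : IsWeightedSystem h lam δ D q e₂ V a Y M)
    (S : IsSpectralPair b c h lam δ D q e₁ e₂) {t β : ℝ} (hβ : ∀ r ≤ t, a r ≤ β) :
    Y t - e₂ * V t ≤ β * D := by
  have h1 := ((W.decay_Y S).sub ((W.decay_V S).const_mul e₂)).le_div S.q_nonneg S.q_lt_one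
    S.h_pos.le (s := q * e₂ * (β * expInt δ h)) (t := t) fun r hr => by
      have h2 := W.V_sub_le (fun x hx => hβ x (hx.trans hr)) S.h_pos.le (s := h)
      have h3 : 0 ≤ q * e₂ := mul_nonneg S.q_nonneg S.e₂_pos.le
      have h4 := mul_le_mul_of_nonneg_left h2 h3
      have h5 := S.e₂_mul
      rw [W.neutral r]
      linear_combination h4 - V r * h5
  refine h1.trans (le_of_eq ?_)
  have hq : 1 - q ≠ 0 := by linarith [S.q_lt_one]
  rw [div_eq_iff hq, S.D_eq]
  linear_combination (-(q * e₂ * β * expInt δ h)) * S.e₁_mul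

theorem hasDerivAt_memoryTerm (W : IsWeightedSystem h lam δ D q e₂ V a Y M)
    (S : IsSpectralPair b c h lam δ D q e₁ e₂) (t : ℝ) :
    HasDerivAt (memoryTerm h D q e₁ V Y) (D * a t - (Y t - e₂ * V t)) t := by
  have h1 := (((((W.continuous_V.integral_hasStrictDerivAt 0 t).hasDerivAt).const_mul e₁).sub
    ((W.continuous_Y.integral_hasStrictDerivAt 0 t).hasDerivAt)).sub_const
    (q * e₁ * ∫ r in (0 : ℝ)..(-h), Y r)).sub ((W.hasDerivAt_V t).const_mul D)
  refine h1.congr_deriv ?_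
  linear_combination V t * S.e₁_sub

theorem integral_Y (W : IsWeightedSystem h lam δ D q e₂ V a Y M) (t : ℝ) :
    (∫ r in (0 : ℝ)..t, Y r) - (∫ r in (0 : ℝ)..t, V r) - q * (∫ r in (0 : ℝ)..(t - h), Y r)
      = -(q * ∫ r in (0 : ℝ)..(-h), Y r) := by
  have hd : ∀ t, HasDerivAt (fun t => (∫ r in (0 : ℝ)..t, Y r) - (∫ r in (0 : ℝ)..t, V r)
      - q * (∫ r in (0 : ℝ)..(t - h), Y r)) 0 t := fun t => by
    have h1 : HasDerivAt (fun t => ∫ x in (0 : ℝ)..(t - h), Y x) (Y (t - h)) t := by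
      have := ((W.continuous_Y.integral_hasStrictDerivAt 0 (t - h)).hasDerivAt).comp t
        ((hasDerivAt_id t).sub_const h)
      exact this.congr_deriv (by simp)
    refine ((((W.continuous_Y.integral_hasStrictDerivAt 0 t).hasDerivAt).sub
      ((W.continuous_V.integral_hasStrictDerivAt 0 t).hasDerivAt)).sub
      (h1.const_mul q)).congr_deriv ?_
    rw [W.neutral t]; ring
  have := eq_of_hasDerivAt_zero hd t 0
  simpa using this

theorem memoryTerm_le (W : IsWeightedSystem h lam δ D q e₂ V a Y M)
    (S : IsSpectralPair b c h lam δ D q e₁ e₂) {t β : ℝ} (hβ : ∀ r ≤ t, a r ≤ β) :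
    memoryTerm h D q e₁ V Y t ≤ feedback h δ q e₁ e₂ * β := by
  have hle := (W.decay_memoryTerm S).le_div S.q_nonneg S.q_lt_one S.h_pos.le
    (s := feedback h δ q e₁ e₂ * β * (1 - q)) (t := t) fun r hr => by
      have hβ' : ∀ x ≤ r, a x ≤ β := fun x hx => hβ x (hx.trans hr)
      have h1 := W.integral_V_sub_le hβ' S.h_pos.le (s := h)
      have h2 := W.V_sub_le hβ' S.h_pos.le (s := h)
      have h3 := W.integral_Y r
      have h4 := mul_le_mul_of_nonneg_left h1 (mul_nonneg S.q_nonneg S.e₁_pos.le)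
      have h5 := mul_le_mul_of_nonneg_left h2 (mul_nonneg S.q_nonneg S.D_nonneg)
      have h6 := S.e₁_mul
      have h7 := S.e₂_mul
      have h8 := S.D_eq
      have h9 : D * (1 - q * Real.exp (-(δ * h))) = q * e₁ * expInt δ h := by
        rw [h8]; linear_combination (q * e₁ * expInt δ h) * h7
      have h10 : feedback h δ q e₁ e₂ * (1 - q) =
          q * e₁ * expIntTwo δ h + q * D * expInt δ h := by
        rw [feedback, h8]
        linear_combination (q * e₁ * (expIntTwo δ h + q * e₂ * expInt δ h ^ 2)) * h6
      have h11 : feedback h δ q e₁ e₂ * β * (1 - q) =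
          β * (q * e₁ * expIntTwo δ h + q * D * expInt δ h) := by rw [← h10]; ring
      rw [h11]
      simp only [memoryTerm]
      have h12 : (e₁ * (1 - q)) * (∫ r in (0 : ℝ)..(-h), Y r) = ∫ r in (0 : ℝ)..(-h), Y r := by
        rw [h6, one_mul]
      have h13 : (e₁ * (1 - q)) * (∫ x in (0 : ℝ)..r, V x) = ∫ x in (0 : ℝ)..r, V x := by
        rw [h6, one_mul]
      linear_combination h4 + h5 - h3 - q * h12 + h13 - V r * h9
  rwa [mul_div_assoc, div_self (by linarith [S.q_lt_one]), mul_one] at hle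

theorem le_memoryTerm (W : IsWeightedSystem h lam δ D q e₂ V a Y M)
    (S : IsSpectralPair b c h lam δ D q e₁ e₂) {t β : ℝ} (hβ : ∀ r ≤ t, β ≤ a r) :
    feedback h δ q e₁ e₂ * β ≤ memoryTerm h D q e₁ V Y t := by
  have := W.neg.memoryTerm_le S (t := t) (β := -β) fun r hr => neg_le_neg (hβ r hr)
  rw [memoryTerm_neg] at this
  linarith

theorem abs_memoryTerm_le (W : IsWeightedSystem h lam δ D q e₂ V a Y M)
    (S : IsSpectralPair b c h lam δ D q e₁ e₂) {t β : ℝ} (hβ : ∀ r ≤ t, |a r| ≤ β) :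
    |memoryTerm h D q e₁ V Y t| ≤ feedback h δ q e₁ e₂ * β := by
  have h1 := W.memoryTerm_le S (fun r hr => (abs_le.1 (hβ r hr)).2)
  have h2 := W.le_memoryTerm S (fun r hr => (abs_le.1 (hβ r hr)).1)
  exact abs_le.2 ⟨by linarith, h1⟩

theorem hasDerivAt_add_memoryTerm (W : IsWeightedSystem h lam δ D q e₂ V a Y M)
    (S : IsSpectralPair b c h lam δ D q e₁ e₂) (t : ℝ) :
    HasDerivAt (fun t => a t + memoryTerm h D q e₁ V Y t) (-M t) t :=
  ((W.hasDerivAt_a t).add (W.hasDerivAt_memoryTerm S t)).congr_deriv (by ring)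

theorem abs_a_sub_le (W : IsWeightedSystem h lam δ D q e₂ V a Y M)
    (S : IsSpectralPair b c h lam δ D q e₁ e₂) {t K x₀ η : ℝ} (hK : ∀ r ≤ t, |a r| ≤ K)
    (hX : ∀ r ≤ t, |a r + memoryTerm h D q e₁ V Y r - x₀| ≤ η) :
    ∀ r ≤ t, |a r - x₀ / (1 + feedback h δ q e₁ e₂)| ≤ η / (1 - feedback h δ q e₁ e₂) := by
  have hσ0 := S.feedback_nonneg
  have hσ1 := S.feedback_lt_one
  set σ := feedback h δ q e₁ e₂
  set A := x₀ / (1 + σ) with hA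
  have hA' : A * (1 + σ) = x₀ := div_mul_cancel₀ _ (by linarith)
  set Z := (fun r => |a r - A|) '' Set.Iic t
  have hZb : BddAbove Z := ⟨K + |A|, by
    rintro _ ⟨r, hr, rfl⟩
    exact (abs_sub _ _).trans (by linarith [hK r hr])⟩
  have hm : ∀ r ≤ t, |a r - A| ≤ sSup Z := fun r hr => le_csSup hZb ⟨r, hr, rfl⟩
  have hstep : ∀ r ≤ t, |a r - A| ≤ η + σ * sSup Z := fun r hr => by
    have h1 := W.memoryTerm_le S (t := r) (β := A + sSup Z) fun s hs => by
      have := (abs_le.1 (hm s (hs.trans hr))).2; linarith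
    have h2 := W.le_memoryTerm S (t := r) (β := A - sSup Z) fun s hs => by
      have := (abs_le.1 (hm s (hs.trans hr))).1; linarith
    have h3 := abs_le.1 (hX r hr)
    rw [abs_le]
    constructor <;> nlinarith [h3.1, h3.2]
  have hsup : sSup Z ≤ η + σ * sSup Z :=
    csSup_le ⟨_, ⟨t, Set.self_mem_Iic, rfl⟩⟩ (by rintro _ ⟨r, hr, rfl⟩; exact hstep r hr)
  intro r hr
  refine (hm r hr).trans ?_
  rw [le_div_iff₀ (by linarith)]
  linarith

theorem tendsto_a_of_tendsto (W : IsWeightedSystem h lam δ D q e₂ V a Y M)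
    (S : IsSpectralPair b c h lam δ D q e₁ e₂) {K x₀ : ℝ} (hK : ∀ r, |a r| ≤ K)
    (hX : Tendsto (fun t => a t + memoryTerm h D q e₁ V Y t) atBot (nhds x₀)) :
    Tendsto a atBot (nhds (x₀ / (1 + feedback h δ q e₁ e₂))) := by
  have hσ1 := S.feedback_lt_one
  rw [Metric.tendsto_nhds] at hX ⊢
  intro ε hε
  obtain ⟨T, hT⟩ := eventually_atBot.1 (hX (ε / 2 * (1 - feedback h δ q e₁ e₂))
    (mul_pos (by linarith) (by linarith)))
  refine eventually_atBot.2 ⟨T, fun t ht => ?_⟩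
  have h1 := W.abs_a_sub_le S (t := T) (fun r _ => hK r)
    (fun r hr => by have := (hT r hr).le; rwa [Real.dist_eq] at this) t ht
  rw [mul_div_assoc, div_self (by linarith), mul_one] at h1
  rw [Real.dist_eq]; linarith

theorem exists_tendsto_a_pos (W : IsWeightedSystem h lam δ D q e₂ V a Y M)
    (S : IsSpectralPair b c h lam δ D q e₁ e₂) {C x : ℝ} (hx : 0 < x)
    (ha : ∀ t, 0 ≤ a t) (hV : ∀ t, 0 ≤ V t) (hM0 : ∀ t, 0 < M t)
    (hM : ∀ t, M t ≤ C * Real.exp (x * t) * V t) :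
    (∃ A > 0, Tendsto a atBot (nhds A)) ∧ ∃ K, ∀ t ≤ 0, V t ≤ K * (1 + |t|) := by
  set B := memoryTerm h D q e₁ V Y
  set X := fun t => a t + B t with hXdef
  have hX' : ∀ t, HasDerivAt X (-M t) t := W.hasDerivAt_add_memoryTerm S
  have hB : ∀ t, 0 ≤ B t := fun t => by
    have := W.le_memoryTerm S (t := t) (β := 0) fun r _ => ha r
    simpa using this
  have hX0 : ∀ t, 0 ≤ X t := fun t => add_nonneg (ha t) (hB t)
  have haX : ∀ t, a t ≤ X t := fun t => by simp only [hXdef]; linarith [hB t]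
  have hanti : Antitone X := fun s t hst =>
    ge_of_hasDerivAt_nonpos hst (fun r _ => hX' r) fun r _ => by linarith [hM0 r]
  have hC : 0 < C := by
    have h1 := (hM0 0).trans_le (hM 0)
    by_contra hcon
    have : C * Real.exp (x * 0) * V 0 ≤ 0 := by
      apply mul_nonpos_of_nonpos_of_nonneg _ (hV 0)
      exact mul_nonpos_of_nonpos_of_nonneg (not_lt.1 hcon) (Real.exp_pos _).le
    linarith
  have hVX : ∀ {t T : ℝ}, t ≤ T → V t ≤ V T + (T - t) * X t := fun {t T} htT => by
    have := le_of_hasDerivAt_nonneg htT (f := fun r => V r + X t * r)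
      (fun r _ => (W.hasDerivAt_V r).add ((hasDerivAt_id r).const_mul (X t)))
      (fun r hr => by
        have h1 := mul_nonneg S.δ_nonneg (hV r)
        have h2 := haX r
        have h3 := hanti hr.1
        linarith)
    linarith
  obtain ⟨T, hT⟩ : ∃ T, C * Real.exp (x * T) / x ^ 2 ≤ 1 / 2 := by
    have h1 : Tendsto (fun T : ℝ => C * Real.exp (x * T) / x ^ 2) atBot (nhds 0) := by
      have := ((Real.tendsto_exp_atBot.comp (tendsto_id.const_mul_atBot hx)).const_mul C).div_const
        (x ^ 2)
      simpa using this
    exact ((h1.eventually_lt_const (by norm_num : (0:ℝ) < 1 / 2)).exists).imp fun _ h => h.le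
  set Xb := 2 * (X T + C * Real.exp (x * T) * V T / x) with hXb
  have hbd : ∀ t, X t ≤ Xb := by
    have h1 : 0 ≤ C * Real.exp (x * T) * V T / x := by
      have := hV T; positivity
    intro t
    rcases le_total t T with ht | ht
    · have hH := le_of_hasDerivAt_nonneg ht
        (f := fun r => X r + C * Real.exp (x * r) * (V T / x + X t * ((T - r) / x + 1 / x ^ 2)))
        (f' := fun r => -M r + C * Real.exp (x * r) * (V T + (T - r) * X t))
        (fun r _ => by
          have h2 := (hX' r).add (((((hasDerivAt_id r).const_mul x).exp).const_mul C).mul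
            ((((((hasDerivAt_id r).const_sub T).div_const x).add_const (1 / x ^ 2)).const_mul
              (X t)).const_add (V T / x)))
          refine h2.congr_deriv ?_
          simp only [id]
          field_simp
          ring)
        (fun r hr => by
          have h3 := hM r
          have h4 := hVX hr.2
          have h5 := mul_le_mul_of_nonneg_left (hanti hr.1) (sub_nonneg.2 hr.2)
          have h6 : C * Real.exp (x * r) * V r ≤ C * Real.exp (x * r) * (V T + (T - r) * X t) := by
            gcongr; linarith
          linarith)
      simp only [sub_self, zero_div, zero_add] at hH
      have h7 : 0 ≤ C * Real.exp (x * t) * (V T / x + X t * ((T - t) / x + 1 / x ^ 2)) := by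
        have := hV T
        have := hX0 t
        have := sub_nonneg.2 ht
        positivity
      have h8 : C * Real.exp (x * T) * (V T / x + X t * (1 / x ^ 2))
          = C * Real.exp (x * T) * V T / x + C * Real.exp (x * T) / x ^ 2 * X t := by ring
      have h9 := mul_le_mul_of_nonneg_right hT (hX0 t)
      rw [hXb]; linarith
    · have := hanti ht
      have := hX0 T
      rw [hXb]; linarith
  have hba : BddAbove (Set.range X) := ⟨Xb, by rintro _ ⟨t, rfl⟩; exact hbd t⟩
  have hlim := tendsto_atBot_ciSup hanti hba
  set L := ⨆ t, X t
  have hL : ∀ t, X t ≤ L := fun t => le_ciSup hba t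
  have hL0 : 0 < L := by
    by_contra hcon
    have hz : X = fun _ => 0 := by
      funext t
      exact le_antisymm ((hL t).trans (not_lt.1 hcon)) (hX0 t)
    have h1 := hX' 0
    rw [hz] at h1
    have := h1.unique (hasDerivAt_const 0 (0:ℝ))
    linarith [hM0 0]
  refine ⟨⟨_, div_pos hL0 ?_, W.tendsto_a_of_tendsto S (K := Xb) (fun r => ?_) hlim⟩, ?_⟩
  · linarith [S.feedback_nonneg]
  · rw [abs_of_nonneg (ha r)]; exact (haX r).trans (hbd r)
  · have hXb0 : 0 ≤ Xb := (hX0 0).trans (hbd 0)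
    refine ⟨V 0 + Xb, fun t ht => ?_⟩
    have h1 := hVX ht
    have h2 := mul_le_mul_of_nonneg_left (hbd t) (neg_nonneg.2 ht)
    rw [abs_of_nonpos ht]
    have h3 := mul_nonneg (hV 0) (neg_nonneg.2 ht)
    linarith

end IsWeightedSystem

theorem tendsto_mul_exp_atBot (K : ℝ) {p : ℝ} (hp : 0 < p) :
    Tendsto (fun r => K * Real.exp (p * r)) atBot (nhds 0) := by
  have := (Real.tendsto_exp_atBot.comp (tendsto_id.const_mul_atBot hp)).const_mul K
  simpa using this

theorem hasDerivAt_div_mul_exp (K : ℝ) {p : ℝ} (hp : p ≠ 0) (r : ℝ) :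
    HasDerivAt (fun r => K / p * Real.exp (p * r)) (K * Real.exp (p * r)) r := by
  refine ((((hasDerivAt_id r).const_mul p).exp).const_mul (K / p)).congr_deriv ?_
  simp only [id]; field_simp

theorem exists_limit_of_abs_deriv_le {F F' : ℝ → ℝ} {K p T : ℝ} (hp : 0 < p)
    (hF : ∀ r, HasDerivAt F (F' r) r) (hb : ∀ r ≤ T, |F' r| ≤ K * Real.exp (p * r)) :
    ∃ L, ∀ r ≤ T, |F r - L| ≤ K / p * Real.exp (p * r) := by
  have hK : 0 ≤ K := by
    have h1 := (abs_nonneg _).trans (hb T le_rfl)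
    exact nonneg_of_mul_nonneg_left h1 (Real.exp_pos _)
  set E := fun r => K / p * Real.exp (p * r) with hE
  have hE0 : ∀ r, 0 ≤ E r := fun r => by simp only [hE]; positivity
  have hE' := hasDerivAt_div_mul_exp K hp.ne'
  have hG : ∀ r s, r ≤ s → s ≤ T → F r + E r ≤ F s + E s := fun r s hrs hs =>
    le_of_hasDerivAt_nonneg hrs (f := fun r => F r + E r) (fun x _ => (hF x).add (hE' x))
      fun x hx => by linarith [(abs_le.1 (hb x (hx.2.trans hs))).1]
  have hH : ∀ r s, r ≤ s → s ≤ T → F s - E s ≤ F r - E r := fun r s hrs hs =>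
    ge_of_hasDerivAt_nonpos hrs (f := fun r => F r - E r) (fun x _ => (hF x).sub (hE' x))
      fun x hx => by linarith [(abs_le.1 (hb x (hx.2.trans hs))).2]
  have hHG : ∀ r ≤ T, ∀ s ≤ T, F r - E r ≤ F s + E s := fun r hr s hs => by
    rcases le_total r s with h | h
    · have := hG r s h hs
      linarith [hE0 r]
    · have := hH s r h hr
      linarith [hE0 s]
  set Z := (fun r => F r + E r) '' Set.Iic T
  have hZ : Z.Nonempty := ⟨_, ⟨T, Set.self_mem_Iic, rfl⟩⟩
  have hZb : BddBelow Z := ⟨F T - E T, by rintro _ ⟨s, hs, rfl⟩; exact hHG T le_rfl s hs⟩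
  refine ⟨sInf Z, fun r hr => ?_⟩
  have h1 : sInf Z ≤ F r + E r := csInf_le hZb ⟨r, hr, rfl⟩
  have h2 : F r - E r ≤ sInf Z := le_csInf hZ (by rintro _ ⟨s, hs, rfl⟩; exact hHG r hr s hs)
  rw [abs_le]
  constructor <;> simp only [hE] at h1 h2 ⊢ <;> linarith

theorem tendsto_of_abs_sub_le_exp {F : ℝ → ℝ} {K p T L : ℝ} (hp : 0 < p)
    (hb : ∀ r ≤ T, |F r - L| ≤ K * Real.exp (p * r)) : Tendsto F atBot (nhds L) := by
  rw [tendsto_iff_norm_sub_tendsto_zero]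
  refine squeeze_zero' (Eventually.of_forall fun _ => norm_nonneg _) ?_ (tendsto_mul_exp_atBot K hp)
  filter_upwards [eventually_le_atBot T] with r hr
  exact hb r hr

theorem abs_le_of_abs_deriv_le {F F' : ℝ → ℝ} {K p T : ℝ} (hp : 0 < p)
    (hF : ∀ r, HasDerivAt F (F' r) r) (hb : ∀ r ≤ T, |F' r| ≤ K * Real.exp (p * r))
    (hlim : Tendsto F atBot (nhds 0)) : ∀ r ≤ T, |F r| ≤ K / p * Real.exp (p * r) := by
  obtain ⟨L, hL⟩ := exists_limit_of_abs_deriv_le hp hF hb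
  have : L = 0 := tendsto_nhds_unique (tendsto_of_abs_sub_le_exp hp hL) hlim
  simpa [this] using hL

namespace IsWeightedSystem

variable {b c h lam δ D q e₁ e₂ : ℝ} {V a Y M : ℝ → ℝ}

theorem abs_Y_le (W : IsWeightedSystem h lam δ D q e₂ V a Y M)
    (S : IsSpectralPair b c h lam δ D q e₁ e₂) {K p T : ℝ} (hp : 0 ≤ p)
    (hV : ∀ r ≤ T, |V r| ≤ K * Real.exp (p * r)) :
    ∀ r ≤ T, |Y r| ≤ K / (1 - q) * Real.exp (p * r) := by
  intro t ht
  have hK : 0 ≤ K := by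
    have h1 := (abs_nonneg _).trans (hV T le_rfl)
    exact nonneg_of_mul_nonneg_left h1 (Real.exp_pos _)
  have hV' : ∀ r ≤ t, |V r| ≤ K * Real.exp (p * t) := fun r hr => by
    refine (hV r (hr.trans ht)).trans ?_
    have := mul_le_mul_of_nonneg_left hr hp
    gcongr
  have h1 := (W.decay_Y S).le_div S.q_nonneg S.q_lt_one S.h_pos.le
    (s := K * Real.exp (p * t)) (t := t) fun r hr => by
      rw [W.neutral r]; linarith [(abs_le.1 (hV' r hr)).2]
  have h2 := (W.neg.decay_Y S).le_div S.q_nonneg S.q_lt_one S.h_pos.le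
    (s := K * Real.exp (p * t)) (t := t) fun r hr => by
      rw [W.neutral r]; linarith [(abs_le.1 (hV' r hr)).1]
  have h3 : K * Real.exp (p * t) / (1 - q) = K / (1 - q) * Real.exp (p * t) := by ring
  rw [h3] at h1 h2
  exact abs_le.2 ⟨by linarith, h1⟩

theorem abs_a_le_of_abs_M_le (W : IsWeightedSystem h lam δ D q e₂ V a Y M)
    (S : IsSpectralPair b c h lam δ D q e₁ e₂) {K p T : ℝ} (hp : 0 < p)
    (ha0 : Tendsto a atBot (nhds 0)) (ha1 : ∀ r ≤ T, |a r| ≤ 1)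
    (hM : ∀ r ≤ T, |M r| ≤ K * Real.exp (p * r)) :
    ∀ r ≤ T, |a r| ≤ K / p / (1 - feedback h δ q e₁ e₂) * Real.exp (p * r) := by
  have hσ1 := S.feedback_lt_one
  have hσ0 := S.feedback_nonneg
  have hK : 0 ≤ K := by
    have h1 := (abs_nonneg _).trans (hM T le_rfl)
    exact nonneg_of_mul_nonneg_left h1 (Real.exp_pos _)
  have hB0 : Tendsto (memoryTerm h D q e₁ V Y) atBot (nhds 0) := by
    rw [Metric.tendsto_nhds] at ha0 ⊢
    intro ε hε
    obtain ⟨N, hN⟩ := eventually_atBot.1 (ha0 (ε / 2) (by linarith))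
    refine eventually_atBot.2 ⟨N, fun t ht => ?_⟩
    have h1 := W.abs_memoryTerm_le S (t := t) (β := ε / 2) fun r hr => by
      have := (hN r (hr.trans ht)).le
      simpa [Real.dist_eq] using this
    have h2 : feedback h δ q e₁ e₂ * (ε / 2) ≤ 1 * (ε / 2) :=
      mul_le_mul_of_nonneg_right hσ1.le (by linarith)
    rw [Real.dist_eq, sub_zero]; linarith
  have hX := abs_le_of_abs_deriv_le hp (W.hasDerivAt_add_memoryTerm S)
    (fun r hr => by rw [abs_neg]; exact hM r hr) (by simpa using ha0.add hB0)
  intro t ht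
  have h1 := W.abs_a_sub_le S (t := t) (x₀ := 0) (η := K / p * Real.exp (p * t))
    (fun r hr => ha1 r (hr.trans ht)) (fun r hr => by
      rw [sub_zero]
      refine (hX r (hr.trans ht)).trans ?_
      have := mul_le_mul_of_nonneg_left hr hp.le
      gcongr) t le_rfl
  rw [zero_div, sub_zero] at h1
  refine h1.trans (le_of_eq ?_)
  ring

theorem hasDerivAt_exp_mul_V (W : IsWeightedSystem h lam δ D q e₂ V a Y M) (r : ℝ) :
    HasDerivAt (fun r => Real.exp (-(δ * r)) * V r) (-(Real.exp (-(δ * r)) * a r)) r := by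
  refine ((((hasDerivAt_id r).const_mul δ).neg.exp).mul (W.hasDerivAt_V r)).congr_deriv ?_
  simp; ring

theorem abs_exp_mul_a_le {K p T : ℝ} (ha : ∀ r ≤ T, |a r| ≤ K * Real.exp (p * r)) :
    ∀ r ≤ T, |-(Real.exp (-(δ * r)) * a r)| ≤ K * Real.exp ((p - δ) * r) := fun r hr => by
  rw [abs_neg, abs_mul, abs_of_pos (Real.exp_pos _)]
  have h1 := mul_le_mul_of_nonneg_left (ha r hr) (Real.exp_pos (-(δ * r))).le
  refine h1.trans (le_of_eq ?_)
  rw [mul_left_comm, ← Real.exp_add]; congr 2; ring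

theorem V_le_of_abs_a_le (W : IsWeightedSystem h lam δ D q e₂ V a Y M)
    {K p T : ℝ} (hpδ : p < δ) (ha : ∀ r ≤ T, |a r| ≤ K * Real.exp (p * r)) :
    ∀ r ≤ T, V r ≤ (Real.exp (-(p * T)) * |V T| + K / (δ - p)) * Real.exp (p * r) := by
  intro r hr
  have hK : 0 ≤ K := by
    have h1 := (abs_nonneg _).trans (ha T le_rfl)
    exact nonneg_of_mul_nonneg_left h1 (Real.exp_pos _)
  have hpne : p - δ ≠ 0 := by linarith
  have hd := le_of_hasDerivAt_nonneg hr
    (f := fun r => Real.exp (-(δ * r)) * V r + K / (p - δ) * Real.exp ((p - δ) * r))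
    (fun x _ => (W.hasDerivAt_exp_mul_V x).add (hasDerivAt_div_mul_exp K hpne x))
    (fun x hx => by
      have := abs_exp_mul_a_le (δ := δ) ha x hx.2
      linarith [(abs_le.1 this).1])
  have h1 : K / (p - δ) * Real.exp ((p - δ) * T) ≤ 0 :=
    mul_nonpos_of_nonpos_of_nonneg (div_nonpos_of_nonneg_of_nonpos hK (by linarith))
      (Real.exp_pos _).le
  have h2 : K / (p - δ) = -(K / (δ - p)) := by rw [← neg_sub δ p, div_neg]
  have h3 : Real.exp (-(δ * r)) * V r ≤ Real.exp (-(δ * T)) * |V T|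
      + K / (δ - p) * Real.exp ((p - δ) * r) := by
    have := mul_le_mul_of_nonneg_left (le_abs_self (V T)) (Real.exp_pos (-(δ * T))).le
    rw [h2] at hd h1
    linarith
  have h4 := mul_le_mul_of_nonneg_left h3 (Real.exp_pos (δ * r)).le
  have h5 : Real.exp (δ * r) * (Real.exp (-(δ * r)) * V r) = V r := by
    rw [← mul_assoc, ← Real.exp_add]; simp
  have h6 : Real.exp (δ * r) * (K / (δ - p) * Real.exp ((p - δ) * r))
      = K / (δ - p) * Real.exp (p * r) := by
    rw [mul_left_comm, ← Real.exp_add]; congr 2; ring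
  have h7 : Real.exp (δ * r) * Real.exp (-(δ * T)) ≤ Real.exp (-(p * T)) * Real.exp (p * r) := by
    rw [← Real.exp_add, ← Real.exp_add]
    apply Real.exp_le_exp.2
    nlinarith
  have h8 := mul_le_mul_of_nonneg_right h7 (abs_nonneg (V T))
  rw [h5, mul_add, h6] at h4
  linarith

theorem abs_V_le_of_abs_a_le (W : IsWeightedSystem h lam δ D q e₂ V a Y M)
    {K p T : ℝ} (hpδ : p < δ) (ha : ∀ r ≤ T, |a r| ≤ K * Real.exp (p * r)) :
    ∀ r ≤ T, |V r| ≤ (Real.exp (-(p * T)) * |V T| + K / (δ - p)) * Real.exp (p * r) :=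
  fun r hr => by
  have h1 := W.V_le_of_abs_a_le hpδ ha r hr
  have h2 := W.neg.V_le_of_abs_a_le hpδ (fun r hr => by rw [abs_neg]; exact ha r hr) r hr
  rw [abs_neg] at h2
  exact abs_le.2 ⟨by linarith, h1⟩

theorem abs_a_le_of_abs_V_le (W : IsWeightedSystem h lam δ D q e₂ V a Y M)
    (S : IsSpectralPair b c h lam δ D q e₁ e₂) {C K x p T : ℝ} (hx : 0 < x) (hp : 0 ≤ p)
    (hC : 0 ≤ C) (ha0 : Tendsto a atBot (nhds 0)) (ha1 : ∀ r ≤ T, |a r| ≤ 1)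
    (hM : ∀ r ≤ T, |M r| ≤ C * Real.exp (x * r) * (|Y r| + |Y (r - h)|))
    (hV : ∀ r ≤ T, |V r| ≤ K * Real.exp (p * r)) :
    ∀ r ≤ T, |a r| ≤ K * (2 * C / (1 - q) / (p + x) / (1 - feedback h δ q e₁ e₂))
      * Real.exp ((p + x) * r) := by
  have hY := W.abs_Y_le S hp hV
  have hq := S.q_lt_one
  have hK : 0 ≤ K := by
    have h1 := (abs_nonneg _).trans (hV T le_rfl)
    exact nonneg_of_mul_nonneg_left h1 (Real.exp_pos _)
  have hM' : ∀ r ≤ T, |M r| ≤ 2 * C * (K / (1 - q)) * Real.exp ((p + x) * r) := fun r hr => by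
    refine (hM r hr).trans ?_
    have h1 := hY r hr
    have h2 : |Y (r - h)| ≤ K / (1 - q) * Real.exp (p * r) := by
      refine (hY (r - h) (by linarith [S.h_pos])).trans ?_
      have : p * (r - h) ≤ p * r := mul_le_mul_of_nonneg_left (by linarith [S.h_pos]) hp
      have : 0 ≤ K / (1 - q) := div_nonneg hK (by linarith)
      gcongr
    have h3 : 0 ≤ C * Real.exp (x * r) := by positivity
    refine (mul_le_mul_of_nonneg_left (add_le_add h1 h2) h3).trans (le_of_eq ?_)
    have : Real.exp ((p + x) * r) = Real.exp (x * r) * Real.exp (p * r) := by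
      rw [← Real.exp_add]; congr 1; ring
    rw [this]; ring
  intro r hr
  refine (W.abs_a_le_of_abs_M_le S (by linarith) ha0 ha1 hM' r hr).trans (le_of_eq ?_)
  ring

theorem eventually_sign (W : IsWeightedSystem h lam δ D q e₂ V a Y M)
    (S : IsSpectralPair b c h lam δ D q e₁ e₂) {C K x T : ℝ} (hx : 0 < x) (hC : 0 ≤ C)
    (hT : T ≤ 0) (ha0 : Tendsto a atBot (nhds 0)) (ha1 : ∀ r ≤ T, |a r| ≤ 1)
    (hM : ∀ r ≤ T, |M r| ≤ C * Real.exp (x * r) * (|Y r| + |Y (r - h)|))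
    (hY : ∀ r ≤ T, |Y r| ≤ K * Real.exp (-(x / 2) * r)) :
    (∀ᶠ t in atBot, V t = 0) ∨ (∀ᶠ t in atBot, 0 < V t) ∨ ∀ᶠ t in atBot, V t < 0 := by
  have hσ1 := S.feedback_lt_one
  have hq := S.q_lt_one
  have hinit : ∃ K', ∀ r ≤ T, |a r| ≤ K' * Real.exp (x / 2 * r) := by
    refine ⟨_, W.abs_a_le_of_abs_M_le S (by linarith) ha0 ha1
      (K := C * K * (1 + Real.exp (x / 2 * h))) fun r hr => (hM r hr).trans ?_⟩
    have h1 := hY r hr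
    have h2 := hY (r - h) (by linarith [S.h_pos])
    have h3 : 0 ≤ C * Real.exp (x * r) := by positivity
    refine (mul_le_mul_of_nonneg_left (add_le_add h1 h2) h3).trans (le_of_eq ?_)
    have e1 : Real.exp (-(x / 2) * (r - h)) = Real.exp (x / 2 * h) * Real.exp (-(x / 2) * r) := by
      rw [← Real.exp_add]; congr 1; ring
    have e2 : Real.exp (x * r) * Real.exp (-(x / 2) * r) = Real.exp (x / 2 * r) := by
      rw [← Real.exp_add]; congr 1; ring
    rw [e1, ← e2]; ring
  have hboot : ∀ n : ℕ, (∃ p, (n + 1) * (x / 2) ≤ p ∧ ∃ K', ∀ r ≤ T, |a r| ≤ K' * Real.exp (p * r))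
      ∨ ∃ p > δ, ∃ K', ∀ r ≤ T, |a r| ≤ K' * Real.exp (p * r) := by
    intro n
    induction n with
    | zero => exact Or.inl ⟨x / 2, by simp, hinit⟩
    | succ n ih =>
      rcases ih with ⟨p, hp, K', hK'⟩ | h
      · rcases lt_or_ge δ p with hlt | hle
        · exact Or.inr ⟨p, hlt, K', hK'⟩
        · left
          have hn : x / 2 ≤ (n + 1) * (x / 2) := by
            have : (0:ℝ) ≤ n * (x / 2) := by positivity
            linarith
          have hK0 : 0 ≤ K' := by
            have h1 := (abs_nonneg _).trans (hK' T le_rfl)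
            exact nonneg_of_mul_nonneg_left h1 (Real.exp_pos _)
          have ha' : ∀ r ≤ T, |a r| ≤ K' * Real.exp ((p - x / 4) * r) := fun r hr => by
            refine (hK' r hr).trans ?_
            have : p * r ≤ (p - x / 4) * r := by
              have := mul_nonneg_of_nonpos_of_nonpos (neg_nonpos.2 hx.le) (hr.trans hT)
              linarith
            gcongr
          refine ⟨p - x / 4 + x, ?_, _, W.abs_a_le_of_abs_V_le S hx (by linarith) hC ha0 ha1 hM
            (W.abs_V_le_of_abs_a_le (by linarith) ha')⟩
          push_cast
          linarith
      · exact Or.inr h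
  obtain ⟨p, hp, K', hK'⟩ : ∃ p > δ, ∃ K', ∀ r ≤ T, |a r| ≤ K' * Real.exp (p * r) := by
    obtain ⟨n, hn⟩ := exists_nat_gt (δ / (x / 2))
    rw [div_lt_iff₀ (by linarith)] at hn
    rcases hboot n with ⟨p, hp, h⟩ | h
    · exact ⟨p, by linarith, h⟩
    · exact h
  have hpδ : 0 < p - δ := by linarith
  have hp0 : 0 ≤ p := S.δ_nonneg.trans hp.le
  obtain ⟨L, hL⟩ := exists_limit_of_abs_deriv_le hpδ W.hasDerivAt_exp_mul_V
    (abs_exp_mul_a_le (δ := δ) hK')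
  have hlim := tendsto_of_abs_sub_le_exp hpδ hL
  rcases lt_trichotomy L 0 with hL0 | hL0 | hL0
  · right; right
    filter_upwards [hlim.eventually_lt_const hL0] with t ht
    exact neg_of_mul_neg_right ht (Real.exp_pos _).le
  · left
    rw [hL0] at hlim
    have hVF : ∀ {κ T' : ℝ}, (∀ r ≤ T', |Real.exp (-(δ * r)) * V r| ≤ κ * Real.exp ((p - δ) * r)) →
        ∀ r ≤ T', |V r| ≤ κ * Real.exp (p * r) := fun {κ T'} hκ r hr => by
      have h1 := mul_le_mul_of_nonneg_left (hκ r hr) (Real.exp_pos (δ * r)).le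
      rw [abs_mul, abs_of_pos (Real.exp_pos _), ← mul_assoc, ← Real.exp_add] at h1
      have h2 : Real.exp (δ * r) * (κ * Real.exp ((p - δ) * r)) = κ * Real.exp (p * r) := by
        rw [mul_left_comm, ← Real.exp_add]; congr 2; ring
      rw [h2] at h1
      simpa using h1
    set Γ := 2 * C / (1 - q) / (p + x) / (1 - feedback h δ q e₁ e₂) with hΓ
    have hΓ0 : 0 ≤ Γ := by
      have h1 : 0 < 1 - q := by linarith
      have h2 : 0 < 1 - feedback h δ q e₁ e₂ := by linarith
      have h3 : 0 < p + x := by linarith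
      positivity
    obtain ⟨T', hT'T, hT'⟩ : ∃ T' ≤ T, Γ / (p - δ) * Real.exp (x * T') ≤ 1 / 2 := by
      have h1 := (tendsto_mul_exp_atBot (Γ / (p - δ)) hx).eventually_lt_const
        (by norm_num : (0:ℝ) < 1 / 2)
      obtain ⟨T', h2, h3⟩ := (h1.and (eventually_le_atBot T)).exists
      exact ⟨T', h3, h2.le⟩
    have hV0 : ∀ n : ℕ, ∀ r ≤ T', |V r| ≤ (K' / (p - δ)) * (1 / 2) ^ n * Real.exp (p * r) := by
      intro n
      induction n with
      | zero =>
        intro r hr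
        rw [pow_zero, mul_one]
        exact hVF (T' := T) (by simpa [hL0] using hL) r (hr.trans hT'T)
      | succ n ih =>
        have hk0 : 0 ≤ K' / (p - δ) * (1 / 2) ^ n := by
          have h1 := (abs_nonneg _).trans (ih T' le_rfl)
          exact nonneg_of_mul_nonneg_left h1 (Real.exp_pos _)
        have h1 := W.abs_a_le_of_abs_V_le S hx hp0 hC ha0 (fun r hr => ha1 r (hr.trans hT'T))
          (fun r hr => hM r (hr.trans hT'T)) ih
        rw [← hΓ] at h1
        set k := K' / (p - δ) * (1 / 2) ^ n
        have h2 : ∀ r ≤ T', |a r| ≤ k * Γ * Real.exp (x * T') * Real.exp (p * r) := fun r hr => by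
          refine (h1 r hr).trans ?_
          rw [add_mul, Real.exp_add]
          have : x * r ≤ x * T' := mul_le_mul_of_nonneg_left hr hx.le
          have h3 : Real.exp (x * r) ≤ Real.exp (x * T') := Real.exp_le_exp.2 this
          have h4 : 0 ≤ k * Γ * Real.exp (p * r) := by positivity
          nlinarith
        have h3 := hVF (abs_le_of_abs_deriv_le hpδ W.hasDerivAt_exp_mul_V
          (abs_exp_mul_a_le (δ := δ) h2) hlim)
        intro r hr
        refine (h3 r hr).trans ?_
        have h4 : k * Γ * Real.exp (x * T') / (p - δ) = k * (Γ / (p - δ) * Real.exp (x * T')) := by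
          ring
        rw [h4]
        have h5 := mul_le_mul_of_nonneg_left hT' hk0
        have h6 := mul_le_mul_of_nonneg_right h5 (Real.exp_pos (p * r)).le
        refine h6.trans (le_of_eq ?_)
        rw [pow_succ, ← mul_assoc]
    filter_upwards [eventually_le_atBot T'] with t ht
    have h1 : Tendsto (fun n : ℕ => (K' / (p - δ)) * (1 / 2 : ℝ) ^ n * Real.exp (p * t)) atTop
        (nhds 0) := by
      have := ((tendsto_pow_atTop_nhds_zero_of_lt_one (by norm_num : (0:ℝ) ≤ 1 / 2)
        (by norm_num)).const_mul (K' / (p - δ))).mul_const (Real.exp (p * t))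
      simpa using this
    have h2 := ge_of_tendsto' h1 fun n => hV0 n t ht
    exact abs_eq_zero.1 (le_antisymm h2 (abs_nonneg _))
  · right; left
    filter_upwards [hlim.eventually_const_lt hL0] with t ht
    exact pos_of_mul_pos_right ht (Real.exp_pos _).le

theorem Y_pos_of_V_pos (W : IsWeightedSystem h lam δ D q e₂ V a Y M)
    (S : IsSpectralPair b c h lam δ D q e₁ e₂) {T : ℝ} (hV : ∀ t < T, 0 < V t) :
    ∀ t < T, 0 < Y t := by
  have hY0 : ∀ t < T, 0 ≤ Y t := fun t ht => by
    have := (W.neg.decay_Y S).le_div S.q_nonneg S.q_lt_one S.h_pos.le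
      (s := 0) (t := t) fun r hr => by
        rw [W.neutral r]; linarith [hV r (hr.trans_lt ht)]
    rw [zero_div] at this
    linarith
  intro t ht
  rw [W.neutral t]
  have := mul_nonneg S.q_nonneg (hY0 (t - h) (by linarith [S.h_pos]))
  linarith [hV t ht]

theorem a_nonpos_of_V_pos (W : IsWeightedSystem h lam δ D q e₂ V a Y M)
    (S : IsSpectralPair b c h lam δ D q e₁ e₂) (ha0 : Tendsto a atBot (nhds 0))
    (hM : ∀ t, 0 < Y t → 0 < Y (t - h) → 0 < M t) {T : ℝ} (hV : ∀ t < T, 0 < V t) :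
    ∀ t < T, a t ≤ 0 := by
  intro t₂ ht₂
  by_contra hcon
  push Not at hcon
  obtain ⟨N, hN⟩ := eventually_atBot.1 (ha0.eventually_lt_const hcon)
  have hNt : N ≤ t₂ := by
    by_contra h
    exact lt_irrefl _ (hN t₂ (not_le.1 h).le)
  obtain ⟨t₁, ht₁, hmax⟩ := isCompact_Icc.exists_isMaxOn (Set.nonempty_Icc.2 hNt)
    W.continuous_a.continuousOn
  have hge : a t₂ ≤ a t₁ := hmax (Set.right_mem_Icc.2 hNt)
  have hall : ∀ r ≤ t₁, a r ≤ a t₁ := fun r hr => by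
    rcases le_total r N with h | h
    · exact (hN r h).le.trans hge
    · exact hmax ⟨h, hr.trans ht₁.2⟩
  have h1 := hasDerivAt_nonneg_of_left_max (W.hasDerivAt_a t₁) (by
    filter_upwards [self_mem_nhdsWithin] with s hs
    exact hall s (le_of_lt hs))
  have h2 := W.gap_le S hall
  have ht₁T : t₁ < T := ht₁.2.trans_lt ht₂
  have hY := W.Y_pos_of_V_pos S hV
  have h3 := hM t₁ (hY t₁ ht₁T) (hY (t₁ - h) (by linarith [S.h_pos]))
  linarith

theorem V_le_of_a_nonpos (W : IsWeightedSystem h lam δ D q e₂ V a Y M) {s t : ℝ} (hst : s ≤ t)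
    (ha : ∀ r ∈ Set.Icc s t, a r ≤ 0) : Real.exp (-(δ * s)) * V s ≤ Real.exp (-(δ * t)) * V t :=
  le_of_hasDerivAt_nonneg hst (f := fun r => Real.exp (-(δ * r)) * V r)
    (fun r _ => W.hasDerivAt_exp_mul_V r) fun r hr => by
      have := mul_nonneg (Real.exp_pos (-(δ * r))).le (neg_nonneg.2 (ha r hr))
      linarith

theorem not_eventually_V_pos (W : IsWeightedSystem h lam δ D q e₂ V a Y M)
    (S : IsSpectralPair b c h lam δ D q e₁ e₂) (ha0 : Tendsto a atBot (nhds 0))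
    (hM : ∀ t, 0 < Y t → 0 < Y (t - h) → 0 < M t) : ¬∀ᶠ t in atBot, 0 < V t := by
  intro hev
  obtain ⟨N, hN⟩ := eventually_atBot.1 hev
  have hpos : ∀ t, 0 < V t := by
    by_contra hcon
    push Not at hcon
    obtain ⟨z, hz⟩ := hcon
    set Z := {t | V t ≤ 0} with hZ
    have hZc : IsClosed Z := isClosed_le W.continuous_V continuous_const
    have hZb : BddBelow Z := ⟨N, fun t ht => by
      by_contra h
      exact absurd (hN t (not_le.1 h).le) (not_lt.2 ht)⟩
    have hT : sInf Z ∈ Z := hZc.csInf_mem ⟨z, hz⟩ hZb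
    set T := sInf Z
    have hV : ∀ t < T, 0 < V t := fun t ht => by
      by_contra h
      exact absurd (csInf_le hZb (not_lt.1 h : t ∈ Z)) (not_le.2 ht)
    have ha := W.a_nonpos_of_V_pos S ha0 hM hV
    have haT : a T ≤ 0 := by
      refine le_of_tendsto ((W.continuous_a.tendsto T).mono_left
        (nhdsWithin_le_nhds (s := Set.Iio T))) ?_
      filter_upwards [self_mem_nhdsWithin] with s hs
      exact ha s hs
    have h1 := W.V_le_of_a_nonpos (s := T - 1) (t := T) (by linarith) fun r hr => by
      rcases hr.2.eq_or_lt with h | h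
      · rw [h]; exact haT
      · exact ha r h
    have h2 := mul_pos (Real.exp_pos (-(δ * (T - 1)))) (hV (T - 1) (by linarith))
    have h3 := pos_of_mul_pos_right (h2.trans_le h1) (Real.exp_pos _).le
    exact absurd hT (not_le.2 h3)
  have ha : ∀ t, a t ≤ 0 := fun t =>
    W.a_nonpos_of_V_pos S ha0 hM (T := t + 1) (fun r _ => hpos r) t (by linarith)
  obtain ⟨C, hC⟩ := W.bound
  have h0 : Tendsto (fun t : ℝ => C * Real.exp (-(lam * t))) atTop (nhds 0) := by
    have := ((Real.tendsto_exp_neg_atTop_nhds_zero).comp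
      (tendsto_id.const_mul_atTop S.lam_pos)).const_mul C
    simpa using this
  obtain ⟨t, ht, ht0⟩ := ((h0.eventually_lt_const (hpos 0)).and (eventually_ge_atTop 0)).exists
  have h1 := W.V_le_of_a_nonpos ht0 fun r _ => ha r
  have h2 : Real.exp (-(δ * t)) ≤ 1 :=
    Real.exp_le_one_iff.2 (by have := mul_nonneg S.δ_nonneg ht0; linarith)
  have h3 := mul_le_mul_of_nonneg_right h2 (hpos t).le
  have h4 := (le_abs_self _).trans (hC t).1
  simp at h1
  linarith

theorem V_eq_zero_step (W : IsWeightedSystem h lam δ D q e₂ V a Y M)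
    (S : IsSpectralPair b c h lam δ D q e₁ e₂) {C T : ℝ} (hC : 0 ≤ C)
    (hM : ∀ t, |M t| ≤ C * (|Y t| + |Y (t - h)|)) (hV : ∀ t ≤ T, V t = 0) :
    ∀ t ≤ T + h / 2, V t = 0 := by
  have hh := S.h_pos
  have hY : ∀ t ≤ T, Y t = 0 := fun t ht => by
    have := W.abs_Y_le S (K := 0) (p := 0) le_rfl (fun r hr => by simp [hV r hr]) t ht
    simpa using this
  have ha : ∀ t < T, a t = 0 := fun t ht => by
    have h1 : V =ᶠ[nhds t] fun _ => 0 := by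
      filter_upwards [Iio_mem_nhds ht] with s hs
      exact hV s (le_of_lt hs)
    have h2 := (W.hasDerivAt_V t).unique ((hasDerivAt_const t (0:ℝ)).congr_of_eventuallyEq h1)
    rw [hV t ht.le] at h2
    linarith
  set k := 2 * δ + 2 + |1 - e₂| + C with hk
  intro t ht
  rcases le_total t T with h | htT
  · exact hV t h
  have hle := ge_of_hasDerivAt_nonpos (s := T - h / 2) (t := t) (by linarith)
    (f := fun r => Real.exp (-(k * r)) * (V r ^ 2 + a r ^ 2))
    (fun r _ => (((hasDerivAt_id r).const_mul k).neg.exp).mul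
      (((W.hasDerivAt_V r).pow 2).add ((W.hasDerivAt_a r).pow 2)))
    (fun r hr => by
      have hYh : Y (r - h) = 0 := hY _ (by linarith [hr.2])
      have hYr : Y r = V r := by rw [W.neutral r, hYh]; ring
      have hMr := hM r
      rw [hYh, hYr, abs_zero, add_zero] at hMr
      have hva : |V r| * |a r| ≤ (V r ^ 2 + a r ^ 2) / 2 := by
        rw [← sq_abs (V r), ← sq_abs (a r)]
        nlinarith [sq_nonneg (|V r| - |a r|)]
      have h1 : -(V r * a r) ≤ |V r| * |a r| := by
        rw [← abs_mul]; exact neg_le_abs _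
      have h2 : (1 - e₂) * (V r * a r) ≤ |1 - e₂| * (|V r| * |a r|) := by
        rw [← abs_mul (V r), ← abs_mul]; exact le_abs_self _
      have h3 : -(a r * M r) ≤ C * (|V r| * |a r|) := by
        refine (neg_le_abs _).trans ?_
        rw [abs_mul]
        have := mul_le_mul_of_nonneg_left hMr (abs_nonneg (a r))
        linarith
      have h4 := mul_nonneg S.D_nonneg (sq_nonneg (a r))
      have h5 := mul_le_mul_of_nonneg_left hva (abs_nonneg (1 - e₂))
      have h6 := mul_le_mul_of_nonneg_left hva hC
      have h7 := mul_nonneg S.δ_nonneg (sq_nonneg (a r))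
      have hkey : -k * (V r ^ 2 + a r ^ 2) + 2 * V r * (δ * V r - a r)
          + 2 * a r * (-D * a r + (V r - e₂ * V r) - M r) ≤ 0 := by
        rw [hk]
        nlinarith [sq_nonneg (V r), sq_nonneg (a r)]
      have h8 := mul_nonpos_of_nonneg_of_nonpos (Real.exp_pos (-(k * r))).le hkey
      refine le_trans (le_of_eq ?_) h8
      simp only [hYr, id, Pi.add_apply, Pi.pow_apply, Pi.neg_apply]
      push_cast
      ring)
  rw [hV (T - h / 2) (by linarith), ha (T - h / 2) (by linarith)] at hle
  have h1 : V t ^ 2 + a t ^ 2 ≤ 0 := by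
    by_contra hcon
    have := mul_pos (Real.exp_pos (-(k * t))) (not_le.1 hcon)
    norm_num at hle
    linarith
  have h2 : V t ^ 2 ≤ 0 := by linarith [sq_nonneg (a t)]
  exact pow_eq_zero_iff (two_ne_zero) |>.1 (le_antisymm h2 (sq_nonneg _))

theorem Y_eq_zero_of_eventually (W : IsWeightedSystem h lam δ D q e₂ V a Y M)
    (S : IsSpectralPair b c h lam δ D q e₁ e₂) {C : ℝ} (hC : 0 ≤ C)
    (hM : ∀ t, |M t| ≤ C * (|Y t| + |Y (t - h)|)) (hV : ∀ᶠ t in atBot, V t = 0) (t : ℝ) :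
    Y t = 0 := by
  have hh := S.h_pos
  obtain ⟨N, hN⟩ := eventually_atBot.1 hV
  have hn : ∀ n : ℕ, ∀ t ≤ N + n * (h / 2), V t = 0 := by
    intro n
    induction n with
    | zero => simpa using hN
    | succ n ih =>
      have := W.V_eq_zero_step S hC hM ih
      intro t ht
      refine this t (ht.trans (le_of_eq ?_))
      push_cast; ring
  have hV0 : ∀ t, V t = 0 := fun t => by
    obtain ⟨n, hn'⟩ := exists_nat_ge ((t - N) / (h / 2))
    rw [div_le_iff₀ (by linarith)] at hn'
    exact hn n t (by linarith)
  have := W.abs_Y_le S (K := 0) (p := 0) le_rfl (T := t) (fun r hr => by simp [hV0 r]) t le_rfl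
  simpa using this

end IsWeightedSystem

/-- A monotone front `φ` with delay `h = c τ`, its neutral part `v`, and `w = v'`. -/
structure IsFrontProfile (b c h : ℝ) (φ v w : ℝ → ℝ) : Prop where
  b_nonneg : 0 ≤ b
  b_lt_one : b < 1
  c_pos : 0 < c
  h_pos : 0 < h
  mono : Monotone φ
  tendsto_bot : Tendsto φ atBot (nhds 0)
  tendsto_top : Tendsto φ atTop (nhds 1)
  neutral : ∀ t, v t = φ t - b * φ (t - h)
  hasDerivAt_v : ∀ t, HasDerivAt v (w t) t
  hasDerivAt_w : ∀ t, HasDerivAt w (c * w t - φ t * (1 - φ (t - h))) t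

theorem IsMonotoneFront.isFrontProfile {b c τ : ℝ} {φ : ℝ → ℝ} (hb0 : 0 ≤ b) (hb1 : b < 1)
    (hτ : 0 < τ) (hc : 0 < c) (hφ : IsMonotoneFront b c τ φ) :
    IsFrontProfile b c (c * τ) φ (fun t => φ t - b * φ (t - c * τ))
      (deriv fun t => φ t - b * φ (t - c * τ)) := by
  obtain ⟨hm, hC, heq, hbot, htop⟩ := hφ
  refine ⟨hb0, hb1, hc, mul_pos hc hτ, hm, hbot, htop, fun _ => rfl, fun t => ?_, fun t => ?_⟩
  · exact ((hC.differentiable (by norm_num)) t).hasDerivAt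
  · have h1 : Differentiable ℝ (deriv fun t => φ t - b * φ (t - c * τ)) := by
      have h2 : ContDiff ℝ (1 + 1) (fun t => φ t - b * φ (t - c * τ)) := by
        rw [one_add_one_eq_two]; exact hC
      exact (contDiff_succ_iff_deriv.1 h2).2.2.differentiable (by norm_num)
    exact (h1 t).hasDerivAt.congr_deriv (by linarith [heq t])

namespace IsFrontProfile

variable {b c h : ℝ} {φ v w : ℝ → ℝ}

theorem shift (P : IsFrontProfile b c h φ v w)
    (s : ℝ) : IsFrontProfile b c h (fun t => φ (t + s)) (fun t => v (t + s))
    (fun t => w (t + s)) where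
  b_nonneg := P.b_nonneg
  b_lt_one := P.b_lt_one
  c_pos := P.c_pos
  h_pos := P.h_pos
  mono _ _ hst := P.mono (by linarith)
  tendsto_bot := P.tendsto_bot.comp (tendsto_atBot_add_const_right _ s tendsto_id)
  tendsto_top := P.tendsto_top.comp (tendsto_atTop_add_const_right _ s tendsto_id)
  neutral t := by rw [P.neutral, sub_add_eq_add_sub]
  hasDerivAt_v t := (P.hasDerivAt_v (t + s)).comp_add_const t s
  hasDerivAt_w t := by
    have := (P.hasDerivAt_w (t + s)).comp_add_const t s
    rwa [← sub_add_eq_add_sub] at this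

theorem nonneg (P : IsFrontProfile b c h φ v w)
    (t : ℝ) : 0 ≤ φ t := P.mono.le_of_tendsto P.tendsto_bot t

theorem le_one (P : IsFrontProfile b c h φ v w)
    (t : ℝ) : φ t ≤ 1 := P.mono.ge_of_tendsto P.tendsto_top t

theorem source_nonneg (P : IsFrontProfile b c h φ v w) (t : ℝ) : 0 ≤ φ t * (1 - φ (t - h)) :=
  mul_nonneg (P.nonneg t) (by linarith [P.le_one (t - h)])

theorem mul_le_v (P : IsFrontProfile b c h φ v w) (t : ℝ) : (1 - b) * φ t ≤ v t := by
  have h1 := P.mono (by linarith [P.h_pos] : t - h ≤ t)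
  have h2 := mul_le_mul_of_nonneg_left h1 P.b_nonneg
  rw [P.neutral t]; linarith

theorem v_le (P : IsFrontProfile b c h φ v w) (t : ℝ) : v t ≤ φ t := by
  have := mul_nonneg P.b_nonneg (P.nonneg (t - h))
  rw [P.neutral t]; linarith

theorem v_nonneg (P : IsFrontProfile b c h φ v w) (t : ℝ) : 0 ≤ v t :=
  (mul_nonneg (by linarith [P.b_lt_one]) (P.nonneg t)).trans (P.mul_le_v t)

theorem continuous_v (P : IsFrontProfile b c h φ v w) : Continuous v :=
  continuous_iff_continuousAt.2 fun t => (P.hasDerivAt_v t).continuousAt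

theorem continuous_w (P : IsFrontProfile b c h φ v w) : Continuous w :=
  continuous_iff_continuousAt.2 fun t => (P.hasDerivAt_w t).continuousAt

theorem eq_sum (P : IsFrontProfile b c h φ v w) (n : ℕ) (t : ℝ) :
    φ t = ∑ k ∈ Finset.range n, b ^ k * v (t - k * h) + b ^ n * φ (t - n * h) := by
  induction n with
  | zero => simp
  | succ n ih =>
    rw [Finset.sum_range_succ, P.neutral (t - n * h)]
    have : t - n * h - h = t - (n + 1 : ℕ) * h := by push_cast; ring
    rw [this]
    refine ih.trans ?_
    rw [pow_succ]
    ring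

theorem continuous (P : IsFrontProfile b c h φ v w) : Continuous φ := by
  have h1 : TendstoUniformly (fun (n : ℕ) t => ∑ k ∈ Finset.range n, b ^ k * v (t - k * h)) φ
      atTop := by
    rw [Metric.tendstoUniformly_iff]
    intro ε hε
    filter_upwards [(tendsto_pow_atTop_nhds_zero_of_lt_one P.b_nonneg
      P.b_lt_one).eventually_lt_const hε] with n hn t
    have h2 := P.eq_sum n t
    have h3 := P.nonneg (t - n * h)
    have h4 := P.le_one (t - n * h)
    have h5 := pow_nonneg P.b_nonneg n
    have h6 : φ t - ∑ k ∈ Finset.range n, b ^ k * v (t - k * h) = b ^ n * φ (t - n * h) := by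
      linarith
    rw [Real.dist_eq, h6, abs_of_nonneg (mul_nonneg h5 h3)]
    nlinarith
  refine h1.continuous (Eventually.of_forall fun n => ?_).frequently
  exact continuous_finsetSum _ fun k _ =>
    continuous_const.mul (P.continuous_v.comp (by fun_prop))

theorem exp_mul_w_anti (P : IsFrontProfile b c h φ v w) {s t : ℝ} (hst : s ≤ t) :
    Real.exp (-(c * t)) * w t ≤ Real.exp (-(c * s)) * w s :=
  ge_of_hasDerivAt_nonpos hst (f := fun r => Real.exp (-(c * r)) * w r)
    (f' := fun r => -(Real.exp (-(c * r)) * (φ r * (1 - φ (r - h)))))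
    (fun r _ => ((((hasDerivAt_id r).const_mul c).neg.exp).mul (P.hasDerivAt_w r)).congr_deriv
      (by simp; ring))
    fun r _ => neg_nonpos.2 (mul_nonneg (Real.exp_pos _).le (P.source_nonneg r))

theorem w_le (P : IsFrontProfile b c h φ v w)
    {s t : ℝ} (hst : s ≤ t) : w t ≤ Real.exp (c * (t - s)) * w s := by
  have h1 := mul_le_mul_of_nonneg_left (P.exp_mul_w_anti hst) (Real.exp_pos (c * t)).le
  rw [← mul_assoc, ← mul_assoc, ← Real.exp_add, ← Real.exp_add] at h1
  have e1 : c * t + -(c * s) = c * (t - s) := by ring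
  rw [e1] at h1
  simpa using h1

theorem w_nonneg (P : IsFrontProfile b c h φ v w) (t₀ : ℝ) : 0 ≤ w t₀ := by
  by_contra hcon
  push Not at hcon
  have h1 : ∀ t, t₀ ≤ t → w t ≤ w t₀ := fun t ht => by
    have h2 := P.w_le ht
    have h3 : 1 ≤ Real.exp (c * (t - t₀)) :=
      Real.one_le_exp (mul_nonneg P.c_pos.le (by linarith))
    nlinarith
  have ht : t₀ ≤ t₀ + (v t₀ + 1) / (-w t₀) := by
    have := div_nonneg (by linarith [P.v_nonneg t₀] : 0 ≤ v t₀ + 1) (by linarith : 0 ≤ -w t₀)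
    linarith
  have h4 := ge_of_hasDerivAt_nonpos ht (f := fun r => v r - w t₀ * r)
    (fun r _ => (P.hasDerivAt_v r).sub ((hasDerivAt_id r).const_mul (w t₀)))
    fun r hr => by linarith [h1 r hr.1]
  have h5 : w t₀ * ((v t₀ + 1) / (-w t₀)) = -(v t₀ + 1) := by
    rw [div_neg, mul_neg, mul_div_cancel₀ _ hcon.ne]
  have h6 := P.v_nonneg (t₀ + (v t₀ + 1) / (-w t₀))
  linarith

theorem v_mono (P : IsFrontProfile b c h φ v w) : Monotone v := fun _ _ hst =>
  le_of_hasDerivAt_nonneg hst (fun r _ => P.hasDerivAt_v r) fun r _ => P.w_nonneg r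

theorem hasDerivAt_flux (P : IsFrontProfile b c h φ v w) (t : ℝ) :
    HasDerivAt (fun t => c * v t - w t) (φ t * (1 - φ (t - h))) t :=
  (((P.hasDerivAt_v t).const_mul c).sub (P.hasDerivAt_w t)).congr_deriv (by ring)

theorem flux_mono (P : IsFrontProfile b c h φ v w)
    {s t : ℝ} (hst : s ≤ t) : c * v s - w s ≤ c * v t - w t :=
  le_of_hasDerivAt_nonneg hst (f := fun t => c * v t - w t) (fun r _ => P.hasDerivAt_flux r)
    fun r _ => P.source_nonneg r

theorem w_le_c_mul (P : IsFrontProfile b c h φ v w) (t₀ : ℝ) : w t₀ ≤ c * v t₀ := by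
  by_contra hcon
  push Not at hcon
  set d := w t₀ - c * v t₀ with hd
  have hd0 : 0 < d := by linarith
  have h1 : ∀ t ≤ t₀, d ≤ w t := fun t ht => by
    have h2 := P.flux_mono ht
    have h3 := mul_nonneg P.c_pos.le (P.v_nonneg t)
    linarith
  have ht : t₀ - (v t₀ + 1) / d ≤ t₀ := by
    have := div_nonneg (by linarith [P.v_nonneg t₀] : 0 ≤ v t₀ + 1) hd0.le
    linarith
  have h4 := le_of_hasDerivAt_nonneg ht (f := fun r => v r - d * r)
    (fun r _ => (P.hasDerivAt_v r).sub ((hasDerivAt_id r).const_mul d))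
    fun r hr => by linarith [h1 r hr.2]
  have h5 : d * ((v t₀ + 1) / d) = v t₀ + 1 := by field_simp
  have h6 := P.v_nonneg (t₀ - (v t₀ + 1) / d)
  linarith

theorem exp_mul_v_anti (P : IsFrontProfile b c h φ v w)
    {κ : ℝ} (hκ : ∀ t, w t ≤ κ * v t) {s t : ℝ} (hst : s ≤ t) :
    v t ≤ Real.exp (κ * (t - s)) * v s := by
  have h0 := ge_of_hasDerivAt_nonpos hst (f := fun r => Real.exp (-(κ * r)) * v r)
    (f' := fun r => -(Real.exp (-(κ * r)) * (κ * v r - w r)))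
    (fun r _ => ((((hasDerivAt_id r).const_mul κ).neg.exp).mul (P.hasDerivAt_v r)).congr_deriv
      (by simp; ring))
    fun r _ => neg_nonpos.2 (mul_nonneg (Real.exp_pos _).le (by linarith [hκ r]))
  have h1 := mul_le_mul_of_nonneg_left h0 (Real.exp_pos (κ * t)).le
  rw [← mul_assoc, ← mul_assoc, ← Real.exp_add, ← Real.exp_add] at h1
  have e1 : κ * t + -(κ * s) = κ * (t - s) := by ring
  rw [e1] at h1
  simpa using h1

theorem v_pos (P : IsFrontProfile b c h φ v w) (t₀ : ℝ) : 0 < v t₀ := by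
  refine lt_of_le_of_ne (P.v_nonneg t₀) fun h0 => ?_
  have h1 : ∀ t, t₀ ≤ t → φ t ≤ 0 := fun t ht => by
    have h2 := P.exp_mul_v_anti P.w_le_c_mul ht
    rw [← h0, mul_zero] at h2
    have h3 := P.mul_le_v t
    by_contra hcon
    have := mul_pos (by linarith [P.b_lt_one] : 0 < 1 - b) (not_le.1 hcon)
    linarith
  have h2 := le_of_tendsto P.tendsto_top ((eventually_ge_atTop t₀).mono h1)
  linarith

theorem pos (P : IsFrontProfile b c h φ v w) (t : ℝ) : 0 < φ t := (P.v_pos t).trans_le (P.v_le t)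

theorem tendsto_v_top (P : IsFrontProfile b c h φ v w) : Tendsto v atTop (nhds (1 - b)) := by
  have h1 := P.tendsto_top.sub ((P.tendsto_top.comp
    (tendsto_atTop_add_const_right _ (-h) tendsto_id)).const_mul b)
  rw [mul_one] at h1
  refine h1.congr fun t => ?_
  rw [P.neutral t]; simp [sub_eq_add_neg]

theorem tendsto_w_top (P : IsFrontProfile b c h φ v w) : Tendsto w atTop (nhds 0) := by
  have h1 : Tendsto (fun t => Real.exp c * (v t - v (t - 1))) atTop (nhds 0) := by
    have := (P.tendsto_v_top.sub (P.tendsto_v_top.comp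
      (tendsto_atTop_add_const_right _ (-1) tendsto_id))).const_mul (Real.exp c)
    rw [sub_self, mul_zero] at this
    exact this.congr fun t => by simp [sub_eq_add_neg]
  refine squeeze_zero P.w_nonneg (fun t => ?_) h1
  have h2 := le_of_hasDerivAt_nonneg (s := t - 1) (t := t) (by linarith)
    (f := fun r => Real.exp c * v r - w t * r)
    (fun r _ => ((P.hasDerivAt_v r).const_mul (Real.exp c)).sub
      ((hasDerivAt_id r).const_mul (w t)))
    (fun r hr => by
      have h3 := P.w_le hr.2
      have h4 : Real.exp (c * (t - r)) ≤ Real.exp c :=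
        Real.exp_le_exp.2 (by have := P.c_pos; nlinarith [hr.1])
      have h5 := mul_le_mul_of_nonneg_right h4 (P.w_nonneg r)
      linarith)
  linarith

theorem exists_exp_bound (P : IsFrontProfile b c h φ v w)
    : ∃ C x, 0 < x ∧ 0 ≤ C ∧ ∀ t, φ t ≤ C * Real.exp (x * t) := by
  have hc := P.c_pos
  obtain ⟨T, hT⟩ := eventually_atBot.1
    (P.tendsto_bot.eventually_lt_const (by norm_num : (0:ℝ) < 1 / 2))
  set x := 1 / (2 * c) with hx
  have hx0 : 0 < x := by positivity
  have hxc : x * c = 1 / 2 := by rw [hx]; field_simp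
  have hsrc : ∀ t ≤ T, v t / 2 ≤ φ t * (1 - φ (t - h)) := fun t ht => by
    have h1 := hT (t - h) (by linarith [P.h_pos])
    have h2 := P.v_le t
    have h3 := P.nonneg t
    nlinarith
  set I := fun t => c * v t - w t with hI
  have hI0 : ∀ t, 0 ≤ I t := fun t => sub_nonneg.2 (P.w_le_c_mul t)
  have hdecay : ∀ t ≤ T, Real.exp (-(x * t)) * I t ≤ Real.exp (-(x * T)) * I T := fun t ht =>
    le_of_hasDerivAt_nonneg ht (f := fun r => Real.exp (-(x * r)) * I r)
      (f' := fun r => Real.exp (-(x * r)) * (φ r * (1 - φ (r - h)) - x * I r))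
      (fun r _ => ((((hasDerivAt_id r).const_mul x).neg.exp).mul (P.hasDerivAt_flux r)).congr_deriv
        (by simp [hI]; ring))
      fun r hr => mul_nonneg (Real.exp_pos _).le (by
        have h1 := hsrc r hr.2
        have h2 : x * I r ≤ v r / 2 := by
          have h3 : x * I r = x * c * v r - x * w r := by simp only [hI]; ring
          have := mul_nonneg hx0.le (P.w_nonneg r)
          rw [h3, hxc]; linarith
        linarith)
  have hvI : ∀ t ≤ T, v (t - 1) ≤ 2 * I t := fun t ht => by
    have h1 := le_of_hasDerivAt_nonneg (s := t - 1) (t := t) (by linarith)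
      (f := fun r => I r - v (t - 1) / 2 * r)
      (fun r _ => (P.hasDerivAt_flux r).sub ((hasDerivAt_id r).const_mul (v (t - 1) / 2)))
      (fun r hr => by
        have h2 := hsrc r (hr.2.trans ht)
        have h3 := P.v_mono hr.1
        linarith)
    have := hI0 (t - 1)
    linarith
  set C₁ := 2 * Real.exp x * (Real.exp (-(x * T)) * I T) / (1 - b) with hC₁
  have hb : 0 < 1 - b := by linarith [P.b_lt_one]
  have hC₁0 : 0 ≤ C₁ := by have := hI0 T; positivity
  refine ⟨C₁ + Real.exp (-(x * (T - 1))), x, hx0, by positivity, fun t => ?_⟩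
  rcases le_total t (T - 1) with ht | ht
  · have h1 := hvI (t + 1) (by linarith)
    have h2 := hdecay (t + 1) (by linarith)
    rw [add_sub_cancel_right] at h1
    have h3 := mul_le_mul_of_nonneg_left h2 (Real.exp_pos (x * (t + 1))).le
    rw [← mul_assoc, ← Real.exp_add, add_neg_cancel, Real.exp_zero, one_mul] at h3
    have h4 := P.mul_le_v t
    have h5 : φ t ≤ C₁ * Real.exp (x * t) := by
      have e1 : Real.exp (x * (t + 1)) = Real.exp x * Real.exp (x * t) := by
        rw [← Real.exp_add]; congr 1; ring
      have e2 : C₁ * Real.exp (x * t) =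
          2 * (Real.exp (x * (t + 1)) * (Real.exp (-(x * T)) * I T)) / (1 - b) := by
        rw [hC₁, e1]; ring
      rw [e2, le_div_iff₀ hb]
      linarith
    have := mul_pos (Real.exp_pos (-(x * (T - 1)))) (Real.exp_pos (x * t))
    linarith
  · have h1 : 1 ≤ Real.exp (-(x * (T - 1))) * Real.exp (x * t) := by
      rw [← Real.exp_add]
      exact Real.one_le_exp (by nlinarith)
    have := mul_nonneg hC₁0 (Real.exp_pos (x * t)).le
    linarith [P.le_one t]

theorem shiftDecay (P : IsFrontProfile b c h φ v w) : ShiftDecay b h φ :=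
  ShiftDecay.of_bound (lam := 0) (C := 1) P.b_nonneg P.b_lt_one P.h_pos (by simp) fun r _ => by
    rw [abs_of_nonneg (P.nonneg r)]
    simp only [zero_mul, neg_zero, Real.exp_zero, mul_one, one_mul]
    linarith [P.le_one r, abs_nonneg r]

theorem exp_mul_anti (P : IsFrontProfile b c h φ v w)
    {κ : ℝ} (hκ : ∀ t, w t ≤ κ * v t) {s t : ℝ} (hst : s ≤ t) :
    φ t ≤ Real.exp (κ * (t - s)) * φ s := by
  have h1 := (P.shiftDecay.sub ((P.shiftDecay.shift (t - s)).const_mul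
    (Real.exp (κ * (t - s))))).le_div P.b_nonneg P.b_lt_one P.h_pos.le (s := 0) (t := t)
    fun r _ => by
      have h2 := P.exp_mul_v_anti hκ (by linarith : r - (t - s) ≤ r)
      rw [sub_sub_cancel, P.neutral, P.neutral, sub_right_comm r] at h2
      linarith
  rw [sub_sub_cancel, zero_div] at h1
  linarith

theorem neutralGain_mul_le (P : IsFrontProfile b c h φ v w)
    {κ : ℝ} (hκ0 : 0 ≤ κ) (hκ : ∀ t, w t ≤ κ * v t) (t : ℝ) :
    neutralGain b h κ * v t ≤ φ t := by
  have hp := one_sub_mul_exp_pos P.b_nonneg P.b_lt_one P.h_pos.le hκ0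
  have hg : neutralGain b h κ * (1 - b * Real.exp (-(κ * h))) = 1 := by
    rw [neutralGain]; field_simp
  have hg0 := neutralGain_pos P.b_nonneg P.b_lt_one P.h_pos.le hκ0
  have hv : ShiftDecay b h v := by
    have : v = fun t => φ t - b * φ (t - h) := funext P.neutral
    rw [this]
    exact P.shiftDecay.sub ((P.shiftDecay.shift h).const_mul b)
  have h1 := ((hv.const_mul (neutralGain b h κ)).sub P.shiftDecay).le_div P.b_nonneg P.b_lt_one
    P.h_pos.le (s := 0) (t := t) fun r _ => by
      have h2 := P.exp_mul_v_anti hκ (by linarith [P.h_pos] : r - h ≤ r)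
      rw [sub_sub_cancel] at h2
      have h3 : Real.exp (-(κ * h)) * v r ≤ v (r - h) := by
        rw [Real.exp_neg, inv_mul_le_iff₀ (Real.exp_pos _)]; exact h2
      have h4 := mul_le_mul_of_nonneg_left h3 (mul_nonneg hg0.le P.b_nonneg)
      have h5 : v r * (neutralGain b h κ * (1 - b * Real.exp (-(κ * h)))) = v r := by
        rw [hg, mul_one]
      linarith [P.neutral r]
  rw [zero_div] at h1
  linarith

theorem source_anti (P : IsFrontProfile b c h φ v w)
    {κ : ℝ} (hκ : ∀ t, w t ≤ κ * v t) {s t : ℝ} (hst : s ≤ t) :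
    φ t * (1 - φ (t - h)) ≤ φ s * (1 - φ (s - h)) * Real.exp (κ * (t - s)) := by
  have h1 := P.exp_mul_anti hκ hst
  have h2 := P.mono (by linarith : s - h ≤ t - h)
  have h3 := P.le_one (t - h)
  calc φ t * (1 - φ (t - h)) ≤ (Real.exp (κ * (t - s)) * φ s) * (1 - φ (t - h)) := by
        gcongr
    _ ≤ (Real.exp (κ * (t - s)) * φ s) * (1 - φ (s - h)) := by
        have := P.nonneg s
        gcongr
    _ = _ := by ring

theorem w_lt_mul (P : IsFrontProfile b c h φ v w)
    {κ : ℝ} (hκ0 : 0 < κ) (hκc : κ ≤ c) (hκ : ∀ t, w t ≤ κ * v t) (t₀ : ℝ) :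
    w t₀ < κ * v t₀ := by
  refine lt_of_le_of_ne (hκ t₀) fun h0 => ?_
  have hE : ∀ t, HasDerivAt (fun t => κ * v t - w t)
      ((κ - c) * w t + φ t * (1 - φ (t - h))) t := fun t =>
    (((P.hasDerivAt_v t).const_mul κ).sub (P.hasDerivAt_w t)).congr_deriv (by ring)
  have hmin : IsLocalMin (fun t => κ * v t - w t) t₀ :=
    Eventually.of_forall fun t => by
      change κ * v t₀ - w t₀ ≤ κ * v t - w t
      linarith [hκ t]
  have hE0 := hmin.hasDerivAt_eq_zero (hE t₀)
  have hE' : ∀ t, t₀ ≤ t → (κ - c) * w t + φ t * (1 - φ (t - h)) ≤ 0 := fun t ht => by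
    have h1 := ge_of_hasDerivAt_nonpos ht
      (f := fun r => Real.exp (-(c * r)) *
        ((κ - c) * w r + φ t₀ * (1 - φ (t₀ - h)) * Real.exp (κ * (r - t₀))))
      (f' := fun r => -(Real.exp (-(c * r)) * ((c - κ) *
        (φ t₀ * (1 - φ (t₀ - h)) * Real.exp (κ * (r - t₀)) - φ r * (1 - φ (r - h))))))
      (fun r _ => ((((hasDerivAt_id r).const_mul c).neg.exp).mul
        (((P.hasDerivAt_w r).const_mul (κ - c)).add
          (((((hasDerivAt_id r).sub_const t₀).const_mul κ).exp).const_mul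
            (φ t₀ * (1 - φ (t₀ - h)))))).congr_deriv (by simp; ring))
      fun r hr => neg_nonpos.2 (mul_nonneg (Real.exp_pos _).le
        (mul_nonneg (by linarith) (by linarith [P.source_anti hκ hr.1])))
    simp only [sub_self, mul_zero, Real.exp_zero, mul_one] at h1
    rw [hE0, mul_zero] at h1
    have h2 := nonpos_of_mul_nonpos_right h1 (Real.exp_pos _)
    linarith [P.source_anti hκ ht]
  have hconst : ∀ t, t₀ ≤ t → κ * v t₀ ≤ w t := fun t ht => by
    have h1 := ge_of_hasDerivAt_nonpos ht (fun r _ => hE r) fun r hr => hE' r hr.1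
    have h2 := mul_le_mul_of_nonneg_left (P.v_mono ht) hκ0.le
    linarith
  have h3 := ge_of_tendsto P.tendsto_w_top ((eventually_ge_atTop t₀).mono hconst)
  have := mul_pos hκ0 (P.v_pos t₀)
  linarith

theorem continuous_ratio (P : IsFrontProfile b c h φ v w) : Continuous fun t => w t / v t :=
  P.continuous_w.div P.continuous_v fun t => (P.v_pos t).ne'

theorem exists_ratio_lt_atBot (P : IsFrontProfile b c h φ v w)
    {κ χ : ℝ} (hκ0 : 0 < κ) (hκc : κ ≤ c) (hκ : ∀ t, w t ≤ κ * v t)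
    (hχ : χ = κ ^ 2 - c * κ + neutralGain b h κ) (hχ0 : 0 < χ) :
    ∃ T, ∀ t ≤ T, w t / v t < κ - χ / (4 * c) := by
  have hc := P.c_pos
  set e := neutralGain b h κ with he
  have he0 : 0 < e := neutralGain_pos P.b_nonneg P.b_lt_one P.h_pos.le hκ0.le
  obtain ⟨T, hT⟩ := eventually_atBot.1
    (P.tendsto_bot.eventually_lt_const (by positivity : 0 < χ / (4 * e)))
  set ε := χ / (4 * c) with hε
  have hεc : ε * c = χ / 4 := by rw [hε]; field_simp
  have hε0 : 0 < ε := by positivity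
  have hρκ : ∀ t, w t / v t ≤ κ := fun t => (div_le_iff₀ (P.v_pos t)).2 (hκ t)
  have hder : ∀ t, HasDerivAt (fun t => w t / v t)
      (c * (w t / v t) - φ t * (1 - φ (t - h)) / v t - (w t / v t) ^ 2) t := fun t => by
    have hv := (P.v_pos t).ne'
    exact ((P.hasDerivAt_w t).div (P.hasDerivAt_v t) hv).congr_deriv (by field_simp)
  have hneg : ∀ t ≤ T, κ - ε ≤ w t / v t →
      c * (w t / v t) - φ t * (1 - φ (t - h)) / v t - (w t / v t) ^ 2 ≤ -(χ / 2) :=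
    fun t ht hr => by
    have h1 := hT (t - h) (by linarith [P.h_pos])
    have h2 := P.neutralGain_mul_le hκ0.le hκ t
    have h3 : e * (1 - φ (t - h)) ≤ φ t * (1 - φ (t - h)) / v t := by
      rw [le_div_iff₀ (P.v_pos t), mul_right_comm]
      exact mul_le_mul_of_nonneg_right h2 (by linarith [P.le_one (t - h)])
    have h4 : e * φ (t - h) ≤ χ / 4 := by
      rw [lt_div_iff₀ (by positivity)] at h1; linarith
    set ρ := w t / v t
    have h5 : (κ - ρ) * (κ + ρ - c) ≤ ε * c := by
      have := hρκ t
      calc (κ - ρ) * (κ + ρ - c) ≤ (κ - ρ) * c := by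
            apply mul_le_mul_of_nonneg_left <;> linarith
        _ ≤ ε * c := by gcongr; linarith
    nlinarith
  refine ⟨T, fun t₀ ht₀ => ?_⟩
  by_contra hcon
  push Not at hcon
  set L := 1 / c + 1 with hL
  have hL0 : 0 < L := by positivity
  have hLc : L * c = 1 + c := by rw [hL]; field_simp
  obtain ⟨t₁, ht₁, hmax⟩ := (isCompact_Icc (a := t₀ - L) (b := t₀)).exists_isMaxOn
    ⟨t₀, by linarith, le_rfl⟩
    (f := fun t => w t / v t + χ / 4 * t)
    (P.continuous_ratio.add (continuous_const.mul continuous_id)).continuousOn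
  have h0 : w t₀ / v t₀ + χ / 4 * t₀ ≤ w t₁ / v t₁ + χ / 4 * t₁ :=
    hmax (Set.right_mem_Icc.2 (by linarith))
  have h1 : κ - ε + χ / 4 * (t₀ - t₁) ≤ w t₁ / v t₁ := by linarith
  rcases ht₁.1.eq_or_lt with h2 | h2
  · rw [← h2] at h1
    have h3 : χ / 4 * (t₀ - (t₀ - L)) = ε + χ / 4 := by
      rw [sub_sub_cancel, ← hεc]; linear_combination ε * hLc
    linarith [hρκ (t₀ - L)]
  · have h3 := hasDerivAt_nonneg_of_left_max
      ((hder t₁).add ((hasDerivAt_id t₁).const_mul (χ / 4))) (by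
        filter_upwards [Ioo_mem_nhdsLT h2] with s hs
        exact hmax ⟨hs.1.le, hs.2.le.trans ht₁.2⟩)
    have h4 := hneg t₁ (ht₁.2.trans ht₀) (by
      have : 0 ≤ χ / 4 * (t₀ - t₁) := mul_nonneg (by linarith) (by linarith [ht₁.2])
      linarith)
    linarith

/-- The logarithmic derivative of `v` is at most the largest zero of `χ₀`. -/
theorem w_le_mul (P : IsFrontProfile b c h φ v w)
    {μ : ℝ} (hμ : 0 < μ) (hχ : ∀ κ > μ, 0 < κ ^ 2 - c * κ + neutralGain b h κ)
    (t : ℝ) : w t ≤ μ * v t := by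
  set K := {κ : ℝ | 0 ≤ κ ∧ ∀ t, w t ≤ κ * v t} with hK
  have hcK : c ∈ K := ⟨P.c_pos.le, P.w_le_c_mul⟩
  have hbdd : BddBelow K := ⟨0, fun κ hκ => hκ.1⟩
  set κ := sInf K with hκdef
  have hκK : ∀ t, w t ≤ κ * v t := fun t => by
    rw [← div_le_iff₀ (P.v_pos t)]
    exact le_csInf ⟨c, hcK⟩ fun k hk => (div_le_iff₀ (P.v_pos t)).2 (hk.2 t)
  have hκc : κ ≤ c := csInf_le hbdd hcK
  by_cases hle : κ ≤ μ
  · exact (hκK t).trans (mul_le_mul_of_nonneg_right hle (P.v_nonneg t))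
  exfalso
  push Not at hle
  have hκ0 : 0 < κ := hμ.trans hle
  have hχ0 := hχ κ hle
  obtain ⟨T, hT⟩ := P.exists_ratio_lt_atBot hκ0 hκc hκK rfl hχ0
  set ε := (κ ^ 2 - c * κ + neutralGain b h κ) / (4 * c)
  have hε0 : 0 < ε := div_pos hχ0 (by linarith [P.c_pos])
  have htop : Tendsto (fun t => w t / v t) atTop (nhds 0) := by
    have := P.tendsto_w_top.div P.tendsto_v_top (by linarith [P.b_lt_one])
    rwa [zero_div] at this
  obtain ⟨T₂, hT₂⟩ := eventually_atTop.1 (htop.eventually_lt_const (half_pos hκ0))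
  have hne : (Set.Icc T (max T T₂)).Nonempty := ⟨T, le_rfl, le_max_left _ _⟩
  obtain ⟨t₁, -, hmax⟩ := isCompact_Icc.exists_isMaxOn hne P.continuous_ratio.continuousOn
  have h1 : w t₁ / v t₁ < κ :=
    (div_lt_iff₀ (P.v_pos t₁)).2 (P.w_lt_mul hκ0 hκc hκK t₁)
  set κ' := max (max (κ - ε) (κ / 2)) (w t₁ / v t₁) with hκ'
  have hlt : κ' < κ := max_lt (max_lt (by linarith) (by linarith)) h1
  have hmem : κ' ∈ K := by
    refine ⟨le_max_of_le_left (le_max_of_le_right (by linarith)), fun s => ?_⟩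
    rw [← div_le_iff₀ (P.v_pos s)]
    rcases le_total s T with hs | hs
    · exact (hT s hs).le.trans ((le_max_left _ _).trans (le_max_left _ _))
    rcases le_total T₂ s with hs' | hs'
    · exact (hT₂ s hs').le.trans ((le_max_right _ _).trans (le_max_left _ _))
    · exact (hmax ⟨hs, hs'.trans (le_max_right _ _)⟩ : w s / v s ≤ _).trans (le_max_right _ _)
  exact absurd (csInf_le hbdd hmem) (not_le.2 hlt)

variable {lam δ D q e₁ e₂ : ℝ}

theorem isWeightedSystem (P : IsFrontProfile b c h φ v w)
    (S : IsSpectralPair b c h lam δ D q e₁ e₂) :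
    IsWeightedSystem h lam δ D q e₂ (fun t => Real.exp (-(lam * t)) * v t)
      (fun t => Real.exp (-(lam * t)) * ((lam + δ) * v t - w t))
      (fun t => Real.exp (-(lam * t)) * φ t)
      (fun t => Real.exp (-(lam * t)) * (φ t * φ (t - h))) where
  hasDerivAt_V t := ((((hasDerivAt_id t).const_mul lam).neg.exp).mul
    (P.hasDerivAt_v t)).congr_deriv (by simp; ring)
  hasDerivAt_a t := ((((hasDerivAt_id t).const_mul lam).neg.exp).mul
    (((P.hasDerivAt_v t).const_mul (lam + δ)).sub (P.hasDerivAt_w t))).congr_deriv (by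
      have h1 : e₂ = lam * (c - lam) - D * δ := by rw [S.root, S.e₁_sub]
      rw [h1, S.D_def]; simp; ring)
  neutral t := by
    have h1 : Real.exp (-(lam * h)) * Real.exp (-(lam * (t - h))) = Real.exp (-(lam * t)) := by
      rw [← Real.exp_add]; congr 1; ring
    rw [P.neutral t, S.q_def, ← h1]; ring
  continuous_Y := by
    have := P.continuous
    fun_prop
  bound := by
    refine ⟨1, fun t => ?_⟩
    have h1 := (P.v_le t).trans (P.le_one t)
    have he := Real.exp_pos (-(lam * t))
    rw [abs_of_nonneg (mul_nonneg he.le (P.v_nonneg t)),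
      abs_of_nonneg (mul_nonneg he.le (P.nonneg t)), one_mul]
    exact ⟨mul_le_of_le_one_right he.le h1, mul_le_of_le_one_right he.le (P.le_one t)⟩

/-- The leading asymptotics of a front at `-∞`. -/
theorem exists_tendsto_pos (P : IsFrontProfile b c h φ v w)
    (S : IsSpectralPair b c h lam δ D q e₁ e₂)
    (hχ : ∀ κ > lam + δ, 0 < κ ^ 2 - c * κ + neutralGain b h κ) :
    (∃ A > 0, Tendsto (fun t => Real.exp (-(lam * t)) * ((lam + δ) * v t - w t)) atBot (nhds A)) ∧
      ∃ K, ∀ t ≤ 0, Real.exp (-(lam * t)) * φ t ≤ K * (1 + |t|) := by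
  have hμ : 0 < lam + δ := add_pos_of_pos_of_nonneg S.lam_pos S.δ_nonneg
  obtain ⟨C, x, hx, hC, hCx⟩ := P.exists_exp_bound
  have hb : 0 < 1 - b := by linarith [P.b_lt_one]
  have hφv : ∀ t, φ t ≤ v t / (1 - b) := fun t => by
    rw [le_div_iff₀ hb]; linarith [P.mul_le_v t]
  obtain ⟨hA, K, hK⟩ := (P.isWeightedSystem S).exists_tendsto_a_pos S hx
    (C := C / (1 - b))
    (fun t => mul_nonneg (Real.exp_pos _).le (sub_nonneg.2 (P.w_le_mul hμ hχ t)))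
    (fun t => mul_nonneg (Real.exp_pos _).le (P.v_nonneg t))
    (fun t => mul_pos (Real.exp_pos _) (mul_pos (P.pos t) (P.pos (t - h))))
    (fun t => by
      have h1 : φ (t - h) ≤ C * Real.exp (x * t) :=
        (P.mono (by linarith [P.h_pos])).trans (hCx t)
      have h2 : φ t * φ (t - h) ≤ v t / (1 - b) * (C * Real.exp (x * t)) :=
        mul_le_mul (hφv t) h1 (P.nonneg _) ((P.nonneg t).trans (hφv t))
      calc _ ≤ Real.exp (-(lam * t)) * (v t / (1 - b) * (C * Real.exp (x * t))) := by gcongr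
        _ = _ := by ring)
  refine ⟨hA, K / (1 - b), fun t ht => ?_⟩
  calc Real.exp (-(lam * t)) * φ t ≤ Real.exp (-(lam * t)) * (v t / (1 - b)) := by
        gcongr; exact hφv t
    _ = Real.exp (-(lam * t)) * v t / (1 - b) := by ring
    _ ≤ K * (1 + |t|) / (1 - b) := div_le_div_of_nonneg_right (hK t ht) hb.le
    _ = _ := by ring

/-- Two fronts with the same leading asymptotics at `-∞` coincide. -/
theorem eq_of_tendsto {φ' v' w' : ℝ → ℝ} (P : IsFrontProfile b c h φ v w)
    (P' : IsFrontProfile b c h φ' v' w') (S : IsSpectralPair b c h lam δ D q e₁ e₂)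
    (hχ : ∀ κ > lam + δ, 0 < κ ^ 2 - c * κ + neutralGain b h κ) {A : ℝ}
    (hA : Tendsto (fun t => Real.exp (-(lam * t)) * ((lam + δ) * v t - w t)) atBot (nhds A))
    (hA' : Tendsto (fun t => Real.exp (-(lam * t)) * ((lam + δ) * v' t - w' t)) atBot (nhds A))
    (t : ℝ) : φ t = φ' t := by
  have W := (P.isWeightedSystem S).sub (P'.isWeightedSystem S)
  have ha0 := hA.sub hA'
  rw [sub_self] at ha0
  obtain ⟨C₁, x₁, hx₁, hC₁, hφ₁⟩ := P.exists_exp_bound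
  obtain ⟨C₂, x₂, hx₂, hC₂, hφ₂⟩ := P'.exists_exp_bound
  obtain ⟨-, K₁, hK₁⟩ := P.exists_tendsto_pos S hχ
  obtain ⟨-, K₂, hK₂⟩ := P'.exists_tendsto_pos S hχ
  have hh := P.h_pos
  set x := min x₁ x₂ with hx
  have hx0 : 0 < x := lt_min hx₁ hx₂
  set Y := fun t => Real.exp (-(lam * t)) * φ t - Real.exp (-(lam * t)) * φ' t with hYdef
  set M := fun t => Real.exp (-(lam * t)) * (φ t * φ (t - h))
    - Real.exp (-(lam * t)) * (φ' t * φ' (t - h)) with hMdef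
  have hMeq : ∀ t, M t = φ (t - h) * Y t + φ' t * Real.exp (-(lam * h)) * Y (t - h) := fun t => by
    have h1 : Real.exp (-(lam * h)) * Real.exp (-(lam * (t - h))) = Real.exp (-(lam * t)) := by
      rw [← Real.exp_add]; congr 1; ring
    simp only [hMdef, hYdef]
    rw [← h1]; ring
  have hexp : Real.exp (-(lam * h)) ≤ 1 :=
    Real.exp_le_one_iff.2 (by have := mul_pos S.lam_pos hh; linarith)
  have hMle : ∀ t B, φ (t - h) ≤ B → φ' t ≤ B → |M t| ≤ B * (|Y t| + |Y (t - h)|) :=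
    fun t B h1 h2 => by
    have h3 : φ' t * Real.exp (-(lam * h)) ≤ B :=
      (mul_le_of_le_one_right (P'.nonneg t) hexp).trans h2
    have h4 := mul_nonneg (P'.nonneg t) (Real.exp_pos (-(lam * h))).le
    rw [hMeq t]
    refine (abs_add_le _ _).trans ?_
    rw [abs_mul, abs_mul, abs_of_nonneg (P.nonneg _), abs_of_nonneg h4, mul_add]
    gcongr
  have hMpos : ∀ t, 0 < Y t → 0 < Y (t - h) → 0 < M t := fun t h1 h2 => by
    rw [hMeq t]
    have := P.pos (t - h)
    have := P'.pos t
    positivity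
  obtain ⟨T, hT⟩ := eventually_atBot.1
    (ha0.eventually (Metric.closedBall_mem_nhds (0 : ℝ) one_pos))
  have hYb : ∀ r ≤ min T 0, |Y r| ≤ (K₁ + K₂) * (1 + 2 / x) * Real.exp (-(x / 2) * r) :=
    fun r hr => by
    have hr0 : r ≤ 0 := hr.trans (min_le_right _ _)
    have h1 := hK₁ r hr0
    have h2 := hK₂ r hr0
    have h3 := mul_nonneg (Real.exp_pos (-(lam * r))).le (P.nonneg r)
    have h4 := mul_nonneg (Real.exp_pos (-(lam * r))).le (P'.nonneg r)
    have h5 : 1 + |r| ≤ (1 + 2 / x) * Real.exp (-(x / 2) * r) := by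
      rw [abs_of_nonpos hr0]
      have h6 := Real.add_one_le_exp (-(x / 2) * r)
      have h7 : -r = 2 / x * (-(x / 2) * r) := by field_simp
      have h8 : 0 ≤ 2 / x := by positivity
      have h9 := mul_le_mul_of_nonneg_left h6 h8
      have h10 : 0 ≤ -(x / 2) * r := by nlinarith
      nlinarith
    have h6 : 0 ≤ K₁ + K₂ := by
      by_contra hcon
      have : 0 < 1 + |r| := by positivity
      nlinarith
    calc |Y r| ≤ (K₁ + K₂) * (1 + |r|) := by
          rw [abs_le]; simp only [hYdef]; constructor <;> linarith
      _ ≤ _ := by rw [mul_assoc]; gcongr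
  rcases W.eventually_sign S (C := C₁ + C₂) hx0 (add_nonneg hC₁ hC₂) (min_le_right T 0) ha0
    (fun r hr => by simpa using hT r (hr.trans (min_le_left _ _)))
    (fun r hr => hMle r _ (by
        have h1 : x₁ * r ≤ x * r :=
          mul_le_mul_of_nonpos_right (min_le_left _ _) (hr.trans (min_le_right _ _))
        calc φ (r - h) ≤ C₁ * Real.exp (x₁ * r) := (P.mono (by linarith)).trans (hφ₁ r)
          _ ≤ (C₁ + C₂) * Real.exp (x * r) := by gcongr; linarith)
      (by
        have h1 : x₂ * r ≤ x * r :=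
          mul_le_mul_of_nonpos_right (min_le_right _ _) (hr.trans (min_le_right _ _))
        calc φ' r ≤ C₂ * Real.exp (x₂ * r) := hφ₂ r
          _ ≤ (C₁ + C₂) * Real.exp (x * r) := by gcongr; linarith)) hYb with h0 | h0 | h0
  · have h1 := W.Y_eq_zero_of_eventually S zero_le_one
      (fun t => hMle t 1 (P.le_one _) (P'.le_one _)) h0 t
    simp only [hYdef, ← mul_sub] at h1
    linarith [(mul_eq_zero.1 h1).resolve_left (Real.exp_pos _).ne']
  · exact absurd h0 (W.not_eventually_V_pos S ha0 hMpos)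
  · refine absurd (h0.mono fun t ht => neg_pos.2 ht) (W.neg.not_eventually_V_pos S
      (by simpa using ha0.neg) fun t h1 h2 => ?_)
    have h3 := P.pos (t - h)
    have h4 := mul_pos (P'.pos t) (Real.exp_pos (-(lam * h)))
    have h5 := hMeq t
    have h6 := mul_pos h3 h1
    have h7 := mul_pos h4 h2
    change 0 < -M t
    rw [h5]
    linarith

end IsFrontProfile

/-- For `b ∈ [0,1)` and `(τ,c) ∈ 𝔇`, the monotone traveling front of the
neutral KPP-Fisher equation with speed `c` is unique up to translation. -/
theorem neutral_KPP_front_unique (b τ c : ℝ) (hb0 : 0 ≤ b) (hb1 : b < 1)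
    (hτ : 0 < τ) (hc : 0 < c) (hD : inD b τ c)
    (φ ψ : ℝ → ℝ) (hφ : IsMonotoneFront b c τ φ) (hψ : IsMonotoneFront b c τ ψ) :
    ∃ h : ℝ, ∀ t : ℝ, ψ t = φ (t + h) := by
  obtain ⟨⟨z, hz, hz0⟩, -⟩ := hD
  rw [chi0_eq] at hz0
  obtain ⟨lam, δ, D, q, e₁, e₂, S, hχ⟩ :=
    exists_isSpectralPair hb0 hb1 (mul_pos hc hτ) hc hz hz0
  have P := hφ.isFrontProfile hb0 hb1 hτ hc
  have Q := hψ.isFrontProfile hb0 hb1 hτ hc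
  obtain ⟨⟨A, hA, hAlim⟩, -⟩ := P.exists_tendsto_pos S hχ
  obtain ⟨⟨B, hB, hBlim⟩, -⟩ := Q.exists_tendsto_pos S hχ
  set s := Real.log (B / A) / lam with hs
  have hls : Real.exp (lam * s) * A = B := by
    rw [hs, mul_div_cancel₀ _ S.lam_pos.ne', Real.exp_log (div_pos hB hA),
      div_mul_cancel₀ _ hA.ne']
  refine ⟨s, fun t => (Q.eq_of_tendsto (P.shift s) S hχ hBlim ?_) t⟩
  have h1 := (hAlim.comp (tendsto_atBot_add_const_right _ s tendsto_id)).const_mul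
    (Real.exp (lam * s))
  rw [hls] at h1
  refine h1.congr fun r => ?_
  simp only [Function.comp, id]
  rw [← mul_assoc, ← Real.exp_add]
  congr 2
  ring
end

section
/- Let b ∈ (0,1) be fixed. There exist a finite number τ(b) > 0 and a strictly decreasing continuous function c_# : (τ(b),∞) → (0,∞) with c_#(τ) → +∞ as τ → τ(b)+ and c_#(τ) → 0 as τ → +∞, such that for all c, τ > 0: the function χ₁ has at least one negative real zero if and only if either τ ∈ (0, τ(b)], or τ > τ(b) and c ≤ c_#(τ). When negative real zeros exist there are exactly two counting multiplicity, μ₂ ≤ μ₁ < 0, and they coincide only if c = c_#(τ). Moreover, the function b ↦ τ(b) is strictly decreasing on (0,1), with τ(b) → 1/e as b → 0+ and τ(b) → 0 as b → 1−. -/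
open Filter Set

/-- The function `w ↦ w (e^{-w} - b)`, whose maximum is the critical delay. -/
noncomputable def delayProfile (b w : ℝ) : ℝ := w * (Real.exp (-w) - b)

/-- The critical delay: the maximum of the delay profile over the interval where it is
nonnegative. -/
noncomputable def critDelay (b : ℝ) : ℝ :=
  sSup (delayProfile b '' Icc 0 (-Real.log b))

/-- Negative zeros of `chi1 b c τ` correspond to positive solutions of
`levelFun b (c ^ 2 * τ) w = (c * τ) ^ 2`. -/
noncomputable def levelFun (b k w : ℝ) : ℝ := (w + k) * delayProfile b w

/-- The squared speed at which `w` solves the level equation for the delay `τ`. -/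
noncomputable def speedSq (b τ w : ℝ) : ℝ :=
  w * delayProfile b w / (τ * (τ - delayProfile b w))

/-- The square of the critical speed. -/
noncomputable def critSpeedSq (b τ : ℝ) : ℝ :=
  sSup (speedSq b τ '' Icc 0 (-Real.log b))

theorem continuous_delayProfile (b : ℝ) : Continuous (delayProfile b) := by
  unfold delayProfile; fun_prop

theorem continuous_levelFun (b k : ℝ) : Continuous (levelFun b k) := by
  have := continuous_delayProfile b
  unfold levelFun; fun_prop

theorem exp_neg_sub_pos_iff {b : ℝ} (hb : 0 < b) (w : ℝ) :
    0 < Real.exp (-w) - b ↔ w < -Real.log b := by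
  rw [sub_pos, ← Real.log_lt_iff_lt_exp hb]
  constructor <;> intro h <;> linarith

theorem delayProfile_pos {b w : ℝ} (hb : 0 < b) (hw : 0 < w) (hwL : w < -Real.log b) :
    0 < delayProfile b w :=
  mul_pos hw ((exp_neg_sub_pos_iff hb w).2 hwL)

theorem delayProfile_pos_imp_mem {b w : ℝ} (hb : 0 < b) (hb1 : b < 1)
    (h : 0 < delayProfile b w) : w ∈ Ioo 0 (-Real.log b) := by
  have hL : Real.log b < 0 := Real.log_neg hb hb1
  rcases pos_and_pos_or_neg_and_neg_of_mul_pos h with ⟨h1, h2⟩ | ⟨h1, h2⟩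
  · exact ⟨h1, (exp_neg_sub_pos_iff hb w).1 h2⟩
  · have := (exp_neg_sub_pos_iff hb w).2 (by linarith)
    linarith

theorem exists_critDelay_eq {b : ℝ} (hb : 0 < b) (hb1 : b < 1) :
    ∃ w ∈ Ioo 0 (-Real.log b), critDelay b = delayProfile b w ∧ 0 < critDelay b ∧
      ∀ v, delayProfile b v ≤ critDelay b := by
  have hL : Real.log b < 0 := Real.log_neg hb hb1
  obtain ⟨w, -, hsup, hmax⟩ := isCompact_Icc.exists_sSup_image_eq_and_ge
    (nonempty_Icc.2 (by linarith : (0 : ℝ) ≤ -Real.log b))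
    (continuous_delayProfile b).continuousOn
  have hhalf := delayProfile_pos (w := -Real.log b / 2) hb (by linarith) (by linarith)
  have hw : 0 < delayProfile b w :=
    hhalf.trans_le (hmax _ ⟨by linarith, by linarith⟩)
  have heq : critDelay b = delayProfile b w := hsup
  refine ⟨w, delayProfile_pos_imp_mem hb hb1 hw, heq, heq ▸ hw, fun v => ?_⟩
  rw [heq]
  rcases le_or_gt (delayProfile b v) 0 with h | h
  · exact h.trans hw.le
  · exact hmax v (Ioo_subset_Icc_self (delayProfile_pos_imp_mem hb hb1 h))

theorem strictAntiOn_critDelay : StrictAntiOn critDelay (Ioo 0 1) := by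
  intro a ha b hb hab
  obtain ⟨-, -, -, -, hle⟩ := exists_critDelay_eq ha.1 ha.2
  obtain ⟨w, hw, heq, -, -⟩ := exists_critDelay_eq hb.1 hb.2
  rw [heq]
  refine lt_of_lt_of_le ?_ (hle w)
  exact mul_lt_mul_of_pos_left (by linarith) hw.1

theorem tendsto_critDelay_zero :
    Tendsto critDelay (nhdsWithin 0 (Ioi 0)) (nhds (Real.exp 1)⁻¹) := by
  have hlim : Tendsto (fun b : ℝ => (Real.exp 1)⁻¹ - b) (nhdsWithin 0 (Ioi 0))
      (nhds (Real.exp 1)⁻¹) := by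
    have : Continuous fun b : ℝ => (Real.exp 1)⁻¹ - b := by fun_prop
    simpa using (this.tendsto 0).mono_left nhdsWithin_le_nhds
  have hmem : ∀ᶠ b in nhdsWithin (0 : ℝ) (Ioi 0), b ∈ Ioo (0 : ℝ) 1 :=
    Ioo_mem_nhdsGT one_pos
  refine tendsto_of_tendsto_of_tendsto_of_le_of_le' hlim tendsto_const_nhds ?_ ?_
  · filter_upwards [hmem] with b hb
    obtain ⟨-, -, -, -, hle⟩ := exists_critDelay_eq hb.1 hb.2
    simpa [delayProfile, Real.exp_neg] using hle 1
  · filter_upwards [hmem] with b hb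
    obtain ⟨w, hw, heq, -, -⟩ := exists_critDelay_eq hb.1 hb.2
    have h1 : w * Real.exp (-w) ≤ Real.exp (-1) := by
      have h2 := Real.add_one_le_exp (w - 1)
      calc w * Real.exp (-w) ≤ Real.exp (w - 1) * Real.exp (-w) := by
            gcongr; linarith
        _ = Real.exp (-1) := by rw [← Real.exp_add]; ring_nf
    rw [heq, ← Real.exp_neg]
    unfold delayProfile
    nlinarith [mul_pos hw.1 hb.1]

theorem tendsto_critDelay_one :
    Tendsto critDelay (nhdsWithin 1 (Iio 1)) (nhds 0) := by
  have hlim : Tendsto (fun b : ℝ => -Real.log b) (nhdsWithin 1 (Iio 1)) (nhds 0) := by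
    have h : ContinuousAt (fun b : ℝ => -Real.log b) 1 :=
      (Real.continuousAt_log one_ne_zero).neg
    simpa using h.tendsto.mono_left nhdsWithin_le_nhds
  have hmem : ∀ᶠ b in nhdsWithin (1 : ℝ) (Iio 1), b ∈ Ioo (0 : ℝ) 1 :=
    Ioo_mem_nhdsLT one_pos
  refine tendsto_of_tendsto_of_tendsto_of_le_of_le' tendsto_const_nhds hlim ?_ ?_
  · filter_upwards [hmem] with b hb
    obtain ⟨-, -, -, hpos, -⟩ := exists_critDelay_eq hb.1 hb.2
    exact hpos.le
  · filter_upwards [hmem] with b hb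
    obtain ⟨w, hw, heq, -, -⟩ := exists_critDelay_eq hb.1 hb.2
    have h1 : Real.exp (-w) ≤ 1 := Real.exp_le_one_iff.2 (by linarith [hw.1])
    rw [heq]
    unfold delayProfile
    nlinarith [mul_pos hw.1 hb.1, hw.1, hw.2]

theorem chi1_eq_zero_iff {b c τ z : ℝ} (hc : 0 < c) (hτ : 0 < τ) (hz : z < 0) :
    chi1 b c τ z = 0 ↔ levelFun b (c ^ 2 * τ) (-(z * c * τ)) = (c * τ) ^ 2 := by
  have hcτ : 0 < c * τ := mul_pos hc hτ
  have hE := Real.exp_pos (-(z * c * τ))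
  have hwpos : 0 < -(z * c * τ) := by nlinarith [mul_pos (neg_pos.2 hz) hcτ]
  have hinv : Real.exp (-(-(z * c * τ))) = (Real.exp (-(z * c * τ)))⁻¹ := Real.exp_neg _
  unfold chi1 levelFun delayProfile
  rw [hinv]
  set E := Real.exp (-(z * c * τ))
  have hq : 0 < z ^ 2 - c * z := by nlinarith [mul_pos hc (neg_pos.2 hz), sq_nonneg z]
  have hsplit : E⁻¹ - b = E⁻¹ * (1 - b * E) := by field_simp
  have hfac : (-(z * c * τ) + c ^ 2 * τ) * (-(z * c * τ) * (E⁻¹ - b)) =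
      (c * τ) ^ 2 * ((z ^ 2 - c * z) * (1 - b * E) / E) := by
    rw [hsplit]; field_simp; ring
  rw [hfac]
  rcases le_or_gt (1 - b * E) 0 with h | h
  · have h1 : E / (1 - b * E) ≤ 0 := div_nonpos_of_nonneg_of_nonpos hE.le h
    have h2 : (z ^ 2 - c * z) * (1 - b * E) / E ≤ 0 :=
      div_nonpos_of_nonpos_of_nonneg (mul_nonpos_of_nonneg_of_nonpos hq.le h) hE.le
    have h3 : 0 < (c * τ) ^ 2 := by positivity
    constructor
    · intro h0; linarith
    · intro h0; nlinarith
  · have h3 : (c * τ) ^ 2 ≠ 0 := by positivity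
    rw [mul_eq_left₀ h3, div_eq_one_iff_eq hE.ne', sub_eq_zero, eq_div_iff h.ne']

theorem hasDerivAt_levelFun (b k w : ℝ) :
    HasDerivAt (levelFun b k)
      ((2 * w + k) * (Real.exp (-w) - b) - w * (w + k) * Real.exp (-w)) w := by
  have h1 : HasDerivAt (fun x : ℝ => Real.exp (-x) - b) (Real.exp (-w) * -1) w :=
    ((hasDerivAt_neg w).exp).sub_const b
  have h2 := ((hasDerivAt_id w).add_const k).mul ((hasDerivAt_id w).mul h1)
  refine h2.congr_deriv ?_
  simp only [id, Pi.mul_apply]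
  ring

/-- The level function has at most one positive critical point. -/
theorem not_two_critical_points {b k x y : ℝ} (hb : 0 < b) (hk : 0 < k) (hx : 0 < x)
    (hxy : x < y)
    (h1 : (2 * x + k) * (Real.exp (-x) - b) - x * (x + k) * Real.exp (-x) = 0)
    (h2 : (2 * y + k) * (Real.exp (-y) - b) - y * (y + k) * Real.exp (-y) = 0) : False := by
  have key : ∀ w : ℝ, (2 * w + k) * (Real.exp (-w) - b) - w * (w + k) * Real.exp (-w) = 0 →
      (2 * w + k) * (1 - b * Real.exp w) = w * (w + k) := by
    intro w h
    have he : Real.exp (-w) * Real.exp w = 1 := by rw [← Real.exp_add]; simp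
    linear_combination Real.exp w * h - ((2 * w + k) - w * (w + k)) * he
  have k1 := key x h1
  have k2 := key y h2
  have hlt := mul_lt_mul_of_pos_left (Real.exp_lt_exp.2 hxy) hb
  have hy := hx.trans hxy
  have hP : 0 < (2 * x + k) * (2 * y + k) := by positivity
  have e1 : (2 * x + k) * (2 * y + k) * (1 - b * Real.exp y) <
      (2 * x + k) * (2 * y + k) * (1 - b * Real.exp x) :=
    mul_lt_mul_of_pos_left (by linarith) hP
  have e2 : 0 < (y - x) * (2 * x * y + k * (x + y) + k ^ 2) :=
    mul_pos (sub_pos.2 hxy) (by positivity)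
  have e3 : (2 * x + k) * (y * (y + k)) < (2 * y + k) * (x * (x + k)) := by
    rw [← k1, ← k2]; linarith
  linarith

/-- A level of the level function is attained at most twice on the positive half-line. -/
theorem levelFun_not_three {b k x y t : ℝ} (hb : 0 < b) (hk : 0 < k) (hx : 0 < x)
    (hxy : x < y) (hyt : y < t) (h1 : levelFun b k x = levelFun b k y)
    (h2 : levelFun b k y = levelFun b k t) : False := by
  obtain ⟨p, hp, hp0⟩ := exists_hasDerivAt_eq_zero hxy (continuous_levelFun b k).continuousOn h1
    fun w _ => hasDerivAt_levelFun b k w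
  obtain ⟨q, hq, hq0⟩ := exists_hasDerivAt_eq_zero hyt (continuous_levelFun b k).continuousOn h2
    fun w _ => hasDerivAt_levelFun b k w
  exact not_two_critical_points hb hk (hx.trans hp.1) (hp.2.trans hq.1) hp0 hq0

/-- A positive level strictly below a value of the level function is attained on both sides. -/
theorem exists_two_levels {b k m w : ℝ} (hb : 0 < b) (hm : 0 < m) (hw : 0 < w)
    (hwL : w < -Real.log b) (h : m < levelFun b k w) :
    ∃ x y, 0 < x ∧ x < y ∧ levelFun b k x = m ∧ levelFun b k y = m := by
  have hc := continuous_levelFun b k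
  have h0 : levelFun b k 0 = 0 := by simp [levelFun, delayProfile]
  have hL : levelFun b k (-Real.log b) = 0 := by
    simp [levelFun, delayProfile, Real.exp_log hb]
  obtain ⟨x, hx, hxm⟩ := intermediate_value_Ioo hw.le hc.continuousOn
    (show m ∈ Ioo _ _ from ⟨by rwa [h0], h⟩)
  obtain ⟨y, hy, hym⟩ := intermediate_value_Ioo' hwL.le hc.continuousOn
    (show m ∈ Ioo _ _ from ⟨by rwa [hL], h⟩)
  exact ⟨x, y, hx.1, hx.2.trans hy.1, hxm, hym⟩

theorem chi1_neg_div_eq_zero {b c τ w : ℝ} (hc : 0 < c) (hτ : 0 < τ)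
    (hw : 0 < w) (h : levelFun b (c ^ 2 * τ) w = (c * τ) ^ 2) :
    -(w / (c * τ)) < 0 ∧ chi1 b c τ (-(w / (c * τ))) = 0 := by
  have hneg : -(w / (c * τ)) < 0 := neg_neg_of_pos (by positivity)
  refine ⟨hneg, (chi1_eq_zero_iff hc hτ hneg).2 ?_⟩
  have : -(-(w / (c * τ)) * c * τ) = w := by field_simp
  rwa [this]

theorem exists_two_zeros {b c τ w : ℝ} (hb : 0 < b) (hc : 0 < c) (hτ : 0 < τ)
    (hw : w ∈ Ioo 0 (-Real.log b)) (h : (c * τ) ^ 2 < levelFun b (c ^ 2 * τ) w) :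
    ∃ z₂ z₁, z₂ < z₁ ∧ z₁ < 0 ∧ chi1 b c τ z₂ = 0 ∧ chi1 b c τ z₁ = 0 := by
  obtain ⟨x, y, hx, hxy, hxm, hym⟩ :=
    exists_two_levels hb (by positivity) hw.1 hw.2 h
  obtain ⟨hx1, hx2⟩ := chi1_neg_div_eq_zero hc hτ hx hxm
  obtain ⟨hy1, hy2⟩ := chi1_neg_div_eq_zero hc hτ (hx.trans hxy) hym
  refine ⟨_, _, ?_, hx1, hy2, hx2⟩
  gcongr

theorem chi1_not_three_zeros {b c τ x y z : ℝ} (hb : 0 < b) (hc : 0 < c) (hτ : 0 < τ)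
    (hxy : x < y) (hyz : y < z) (hz : z < 0) (hx0 : chi1 b c τ x = 0)
    (hy0 : chi1 b c τ y = 0) (hz0 : chi1 b c τ z = 0) : False := by
  have hcτ : 0 < c * τ := mul_pos hc hτ
  have hanti : ∀ p q : ℝ, p < q → -(q * c * τ) < -(p * c * τ) := fun p q h => by
    nlinarith [mul_pos (sub_pos.2 h) hcτ]
  rw [chi1_eq_zero_iff hc hτ (by linarith)] at hx0 hy0 hz0
  have hwpos : 0 < -(z * c * τ) := by nlinarith [mul_pos (neg_pos.2 hz) hcτ]
  exact levelFun_not_three hb (by positivity) hwpos (hanti _ _ hyz) (hanti _ _ hxy)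
    (hz0.trans hy0.symm) (hy0.trans hx0.symm)

/-- Two distinct negative zeros of `chi1` are all of its negative zeros. -/
theorem chi1_zero_eq_or_eq {b c τ z₁ z₂ z : ℝ} (hb : 0 < b) (hc : 0 < c) (hτ : 0 < τ)
    (h21 : z₂ < z₁) (h1 : z₁ < 0) (h20 : chi1 b c τ z₂ = 0) (h10 : chi1 b c τ z₁ = 0)
    (hz : z < 0) (hz0 : chi1 b c τ z = 0) : z = z₂ ∨ z = z₁ := by
  rcases lt_trichotomy z z₂ with h | h | h
  · exact (chi1_not_three_zeros hb hc hτ h h21 h1 hz0 h20 h10).elim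
  · exact Or.inl h
  rcases lt_trichotomy z z₁ with h' | h' | h'
  · exact (chi1_not_three_zeros hb hc hτ h h' h1 h20 hz0 h10).elim
  · exact Or.inr h'
  · exact (chi1_not_three_zeros hb hc hτ h21 h' hz h20 h10 hz0).elim

theorem continuous_speedSq {b : ℝ} (hb : 0 < b) (hb1 : b < 1) :
    Continuous fun p : Ioi (critDelay b) × ℝ => speedSq b p.1 p.2 := by
  obtain ⟨-, -, -, hpos, hle⟩ := exists_critDelay_eq hb hb1
  have hc := continuous_delayProfile b
  unfold speedSq
  refine Continuous.div (by fun_prop) (by fun_prop) fun p => ?_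
  have h1 : critDelay b < p.1 := p.1.2
  have h2 := hle p.2
  have h3 : 0 < (p.1 : ℝ) := hpos.trans h1
  exact (mul_pos h3 (by linarith)).ne'

theorem continuousOn_critSpeedSq {b : ℝ} (hb : 0 < b) (hb1 : b < 1) :
    ContinuousOn (critSpeedSq b) (Ioi (critDelay b)) := by
  rw [continuousOn_iff_continuous_domRestrict]
  exact isCompact_Icc.continuous_sSup (f := fun (t : Ioi (critDelay b)) w => speedSq b t w)
    (continuous_speedSq hb hb1)

theorem exists_critSpeedSq_eq {b τ : ℝ} (hb : 0 < b) (hb1 : b < 1) (hτ : critDelay b < τ) :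
    ∃ w ∈ Ioo 0 (-Real.log b), critSpeedSq b τ = speedSq b τ w ∧ 0 < critSpeedSq b τ ∧
      ∀ v, 0 < v → speedSq b τ v ≤ critSpeedSq b τ := by
  obtain ⟨w₀, hw₀, heq₀, hpos, hle⟩ := exists_critDelay_eq hb hb1
  have hτ0 := hpos.trans hτ
  have hden : ∀ v, 0 < τ * (τ - delayProfile b v) := fun v =>
    mul_pos hτ0 (by linarith [hle v])
  have hcont : Continuous (speedSq b τ) :=
    (continuous_speedSq hb hb1).comp
      (Continuous.prodMk (continuous_const (y := (⟨τ, hτ⟩ : Ioi (critDelay b)))) continuous_id)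
  obtain ⟨w, hw, hsup, hmax⟩ := isCompact_Icc.exists_sSup_image_eq_and_ge
    (nonempty_Icc.2 (by linarith [hw₀.1, hw₀.2] : (0 : ℝ) ≤ -Real.log b)) hcont.continuousOn
  have hpos₀ : 0 < speedSq b τ w₀ :=
    div_pos (mul_pos hw₀.1 (heq₀ ▸ hpos)) (hden w₀)
  have hwpos : 0 < speedSq b τ w := hpos₀.trans_le (hmax _ (Ioo_subset_Icc_self hw₀))
  have heq : critSpeedSq b τ = speedSq b τ w := hsup
  have hmem : ∀ v, 0 ≤ v → 0 < speedSq b τ v → v ∈ Ioo 0 (-Real.log b) := fun v hv h => by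
    have := (div_pos_iff_of_pos_right (hden v)).1 h
    exact delayProfile_pos_imp_mem hb hb1 (pos_of_mul_pos_right this hv)
  refine ⟨w, hmem w hw.1 hwpos, heq, heq ▸ hwpos, fun v hv => ?_⟩
  rw [heq]
  rcases le_or_gt (speedSq b τ v) 0 with h | h
  · exact h.trans hwpos.le
  · exact hmax v (Ioo_subset_Icc_self (hmem v hv.le h))

theorem strictAntiOn_critSpeedSq {b : ℝ} (hb : 0 < b) (hb1 : b < 1) :
    StrictAntiOn (critSpeedSq b) (Ioi (critDelay b)) := by
  intro s hs t ht hst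
  obtain ⟨-, -, -, hpos, hle⟩ := exists_critDelay_eq hb hb1
  obtain ⟨-, -, -, -, hmax⟩ := exists_critSpeedSq_eq hb hb1 hs
  obtain ⟨w, hw, heq, -, -⟩ := exists_critSpeedSq_eq hb hb1 ht
  rw [heq]
  refine lt_of_lt_of_le ?_ (hmax w hw.1)
  have hs' : critDelay b < s := hs
  have hlew := hle w
  have hs0 := hpos.trans hs'
  exact div_lt_div_of_pos_left (mul_pos hw.1 (delayProfile_pos hb hw.1 hw.2))
    (mul_pos hs0 (by linarith))
    (mul_lt_mul'' hst (by linarith) hs0.le (by linarith))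

theorem tendsto_critSpeedSq_critDelay {b : ℝ} (hb : 0 < b) (hb1 : b < 1) :
    Tendsto (critSpeedSq b) (nhdsWithin (critDelay b) (Ioi (critDelay b))) atTop := by
  obtain ⟨w, hw, heq, hpos, hle⟩ := exists_critDelay_eq hb hb1
  have hden : Tendsto (fun t => t * (t - delayProfile b w))
      (nhdsWithin (critDelay b) (Ioi (critDelay b))) (nhdsWithin 0 (Ioi 0)) := by
    refine tendsto_nhdsWithin_iff.2 ⟨?_, ?_⟩
    · have : Continuous fun t => t * (t - delayProfile b w) := by fun_prop
      simpa [heq] using (this.tendsto (critDelay b)).mono_left nhdsWithin_le_nhds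
    · filter_upwards [self_mem_nhdsWithin] with t ht
      have ht' : critDelay b < t := ht
      exact mul_pos (hpos.trans ht') (by linarith)
  have hlim : Tendsto (fun t => speedSq b t w)
      (nhdsWithin (critDelay b) (Ioi (critDelay b))) atTop := by
    simp only [speedSq, div_eq_mul_inv]
    exact (tendsto_inv_nhdsGT_zero.comp hden).const_mul_atTop
      (mul_pos hw.1 (heq ▸ hpos))
  refine tendsto_atTop_mono' _ ?_ hlim
  filter_upwards [self_mem_nhdsWithin] with t ht
  obtain ⟨-, -, -, -, hmax⟩ := exists_critSpeedSq_eq hb hb1 ht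
  exact hmax w hw.1

theorem tendsto_critSpeedSq_atTop {b : ℝ} (hb : 0 < b) (hb1 : b < 1) :
    Tendsto (critSpeedSq b) atTop (nhds 0) := by
  obtain ⟨-, -, -, hpos, hle⟩ := exists_critDelay_eq hb hb1
  have hlim : Tendsto (fun t : ℝ => -Real.log b * critDelay b / t) atTop (nhds 0) :=
    tendsto_const_nhds.div_atTop tendsto_id
  refine tendsto_of_tendsto_of_tendsto_of_le_of_le' tendsto_const_nhds hlim ?_ ?_
  · filter_upwards [eventually_gt_atTop (critDelay b)] with t ht
    obtain ⟨-, -, -, h, -⟩ := exists_critSpeedSq_eq hb hb1 ht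
    exact h.le
  · filter_upwards [eventually_ge_atTop (critDelay b + 1)] with t ht
    obtain ⟨w, hw, heq, -, -⟩ := exists_critSpeedSq_eq hb hb1 (by linarith : critDelay b < t)
    have ht0 : 0 < t := by linarith
    have hlew := hle w
    have hL : 0 < -Real.log b := hw.1.trans hw.2
    rw [heq]
    unfold speedSq
    exact div_le_div₀ (by positivity)
      (mul_le_mul hw.2.le hlew (delayProfile_pos hb hw.1 hw.2).le hL.le) ht0
      (le_mul_of_one_le_right ht0.le (by linarith))

theorem sq_le_levelFun_iff {b c τ w : ℝ} (hτ : 0 < τ) (hw : delayProfile b w < τ) :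
    (c * τ) ^ 2 ≤ levelFun b (c ^ 2 * τ) w ↔ c ^ 2 ≤ speedSq b τ w := by
  unfold levelFun speedSq
  rw [le_div_iff₀ (mul_pos hτ (sub_pos.2 hw))]
  constructor <;> intro h <;> linarith

theorem sq_lt_levelFun_iff {b c τ w : ℝ} (hτ : 0 < τ) (hw : delayProfile b w < τ) :
    (c * τ) ^ 2 < levelFun b (c ^ 2 * τ) w ↔ c ^ 2 < speedSq b τ w := by
  unfold levelFun speedSq
  rw [lt_div_iff₀ (mul_pos hτ (sub_pos.2 hw))]
  constructor <;> intro h <;> linarith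

/-- Two distinct negative zeros exist for subcritical delay or subcritical speed. -/
theorem exists_two_zeros_of_subcritical {b c τ : ℝ} (hb : 0 < b) (hb1 : b < 1) (hc : 0 < c)
    (hτ : 0 < τ)
    (h : τ ≤ critDelay b ∨ (critDelay b < τ ∧ c < √(critSpeedSq b τ))) :
    ∃ z₂ z₁, z₂ < z₁ ∧ z₁ < 0 ∧ chi1 b c τ z₂ = 0 ∧ chi1 b c τ z₁ = 0 := by
  obtain ⟨w₀, hw₀, heq₀, hpos, hle⟩ := exists_critDelay_eq hb hb1
  rcases h with h | ⟨h, hcs⟩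
  · refine exists_two_zeros hb hc hτ hw₀ ?_
    unfold levelFun
    rw [← heq₀]
    have h1 : c ^ 2 * τ * τ ≤ c ^ 2 * τ * critDelay b :=
      mul_le_mul_of_nonneg_left h (by positivity)
    have h2 := mul_pos hw₀.1 hpos
    linarith
  · obtain ⟨w, hw, heq, -, -⟩ := exists_critSpeedSq_eq hb hb1 h
    refine exists_two_zeros hb hc hτ hw ((sq_lt_levelFun_iff hτ ((hle w).trans_lt h)).2 ?_)
    rw [← heq]
    exact (Real.lt_sqrt hc.le).1 hcs

/-- At the critical speed a negative zero exists. -/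
theorem exists_zero_of_critical {b c τ : ℝ} (hb : 0 < b) (hb1 : b < 1) (hc : 0 < c)
    (hτ : critDelay b < τ) (hcs : c = √(critSpeedSq b τ)) :
    ∃ z < 0, chi1 b c τ z = 0 := by
  obtain ⟨-, -, -, hpos, hle⟩ := exists_critDelay_eq hb hb1
  obtain ⟨w, hw, heq, hS, -⟩ := exists_critSpeedSq_eq hb hb1 hτ
  have hτ0 := hpos.trans hτ
  have hlt := (hle w).trans_lt hτ
  have hc2 : c ^ 2 = speedSq b τ w := by rw [hcs, Real.sq_sqrt hS.le, heq]
  have h1 := (sq_le_levelFun_iff hτ0 hlt).2 hc2.le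
  have h2 := not_lt.1 fun h => ((sq_lt_levelFun_iff hτ0 hlt).1 h).ne hc2
  exact ⟨_, chi1_neg_div_eq_zero hc hτ0 hw.1 (le_antisymm h2 h1)⟩

/-- A negative zero at a supercritical delay forces the speed not to exceed the critical one. -/
theorem le_critical_of_zero {b c τ z : ℝ} (hb : 0 < b) (hb1 : b < 1) (hc : 0 < c)
    (hτ : critDelay b < τ) (hz : z < 0) (hz0 : chi1 b c τ z = 0) :
    c ≤ √(critSpeedSq b τ) := by
  obtain ⟨-, -, -, hpos, hle⟩ := exists_critDelay_eq hb hb1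
  obtain ⟨-, -, -, -, hmax⟩ := exists_critSpeedSq_eq hb hb1 hτ
  have hτ0 := hpos.trans hτ
  rw [chi1_eq_zero_iff hc hτ0 hz] at hz0
  have hwpos : 0 < -(z * c * τ) := by
    nlinarith [mul_pos (neg_pos.2 hz) (mul_pos hc hτ0)]
  exact Real.le_sqrt_of_sq_le
    (((sq_le_levelFun_iff hτ0 ((hle _).trans_lt hτ)).1 hz0.ge).trans (hmax _ hwpos))

/-- There is a critical delay function `b ↦ τ(b)`, strictly decreasing on
`(0,1)` with `τ(0+) = 1/e` and `τ(1−) = 0`, and for each `b ∈ (0,1)` a strictly decreasing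
continuous function `c_# : (τ(b),∞) → (0,∞)` with `c_#(τ(b)+) = +∞`, `c_#(+∞) = 0`, such
that `χ₁` has a negative real zero iff either `τ ≤ τ(b)`, or `τ > τ(b)` and `c ≤ c_#(τ)`;
when negative zeros exist there are exactly two counting multiplicity, `μ₂ ≤ μ₁ < 0`,
coinciding only when `c = c_#(τ)`. -/
theorem critical_speed_csharp :
    ∃ τcrit : ℝ → ℝ,
      StrictAntiOn τcrit (Set.Ioo 0 1) ∧
      Tendsto τcrit (nhdsWithin 0 (Set.Ioi 0)) (nhds (Real.exp 1)⁻¹) ∧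
      Tendsto τcrit (nhdsWithin 1 (Set.Iio 1)) (nhds 0) ∧
      ∀ b ∈ Set.Ioo (0 : ℝ) 1,
        0 < τcrit b ∧
        ∃ csharp : ℝ → ℝ,
          ContinuousOn csharp (Set.Ioi (τcrit b)) ∧
          StrictAntiOn csharp (Set.Ioi (τcrit b)) ∧
          (∀ τ > τcrit b, 0 < csharp τ) ∧
          Tendsto csharp (nhdsWithin (τcrit b) (Set.Ioi (τcrit b))) atTop ∧
          Tendsto csharp atTop (nhds 0) ∧
          ∀ c > (0 : ℝ), ∀ τ > (0 : ℝ),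
            ((∃ z < (0 : ℝ), chi1 b c τ z = 0) ↔
              (τ ≤ τcrit b ∨ (τcrit b < τ ∧ c ≤ csharp τ))) ∧
            ((∃ z < (0 : ℝ), chi1 b c τ z = 0) →
              ∃ μ₂ μ₁ : ℝ, μ₂ ≤ μ₁ ∧ μ₁ < 0 ∧ chi1 b c τ μ₂ = 0 ∧ chi1 b c τ μ₁ = 0 ∧
                (∀ z < (0 : ℝ), chi1 b c τ z = 0 → z = μ₂ ∨ z = μ₁) ∧
                (μ₂ = μ₁ → τcrit b < τ ∧ c = csharp τ)) := by
  refine ⟨critDelay, strictAntiOn_critDelay, tendsto_critDelay_zero, tendsto_critDelay_one, ?_⟩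
  rintro b ⟨hb, hb1⟩
  obtain ⟨-, -, -, hpos, -⟩ := exists_critDelay_eq hb hb1
  have hSpos : ∀ τ > critDelay b, 0 < critSpeedSq b τ := fun τ hτ => by
    obtain ⟨-, -, -, h, -⟩ := exists_critSpeedSq_eq hb hb1 hτ
    exact h
  refine ⟨hpos, fun τ => √(critSpeedSq b τ), (continuousOn_critSpeedSq hb hb1).sqrt, ?_,
    fun τ hτ => Real.sqrt_pos.2 (hSpos τ hτ),
    Real.tendsto_sqrt_atTop.comp (tendsto_critSpeedSq_critDelay hb hb1), ?_, ?_⟩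
  · exact fun s hs t ht hst =>
      Real.sqrt_lt_sqrt (hSpos t ht).le (strictAntiOn_critSpeedSq hb hb1 hs ht hst)
  · simpa using (tendsto_critSpeedSq_atTop hb hb1).sqrt
  intro c hc τ hτ
  have hforward : (∃ z < (0 : ℝ), chi1 b c τ z = 0) →
      (τ ≤ critDelay b ∨ (critDelay b < τ ∧ c ≤ √(critSpeedSq b τ))) := by
    rintro ⟨z, hz, hz0⟩
    rcases le_or_gt τ (critDelay b) with h | h
    · exact Or.inl h
    · exact Or.inr ⟨h, le_critical_of_zero hb hb1 hc h hz hz0⟩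
  have hdich : (τ ≤ critDelay b ∨ (critDelay b < τ ∧ c ≤ √(critSpeedSq b τ))) →
      (τ ≤ critDelay b ∨ (critDelay b < τ ∧ c < √(critSpeedSq b τ))) ∨
        (critDelay b < τ ∧ c = √(critSpeedSq b τ)) := by
    rintro (h | ⟨h, hle⟩)
    · exact Or.inl (Or.inl h)
    · rcases hle.lt_or_eq with hlt | heq
      · exact Or.inl (Or.inr ⟨h, hlt⟩)
      · exact Or.inr ⟨h, heq⟩
  refine ⟨⟨hforward, fun h => ?_⟩, fun h => ?_⟩
  · rcases hdich h with hsub | ⟨hcr, heq⟩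
    · obtain ⟨-, z, -, hz, -, hz0⟩ := exists_two_zeros_of_subcritical hb hb1 hc hτ hsub
      exact ⟨z, hz, hz0⟩
    · exact exists_zero_of_critical hb hb1 hc hcr heq
  · by_cases htwo : ∃ z₂ z₁, z₂ < z₁ ∧ z₁ < 0 ∧ chi1 b c τ z₂ = 0 ∧ chi1 b c τ z₁ = 0
    · obtain ⟨z₂, z₁, h21, h1, h20, h10⟩ := htwo
      exact ⟨z₂, z₁, h21.le, h1, h20, h10,
        fun z hz hz0 => chi1_zero_eq_or_eq hb hc hτ h21 h1 h20 h10 hz hz0,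
        fun h => absurd h h21.ne⟩
    · have hcr := (hdich (hforward h)).resolve_left fun hsub =>
        htwo (exists_two_zeros_of_subcritical hb hb1 hc hτ hsub)
      obtain ⟨z, hz, hz0⟩ := h
      refine ⟨z, z, le_rfl, hz, hz0, hz0, fun y hy hy0 => ?_, fun _ => hcr⟩
      rcases lt_trichotomy y z with hyz | hyz | hyz
      · exact (htwo ⟨y, z, hyz, hz, hy0, hz0⟩).elim
      · exact Or.inl hyz
      · exact (htwo ⟨z, y, hyz, hy, hz0, hy0⟩).elim
end
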